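/- arXiv:1312.7554 — 2 statements merged into one kernel-verified Lean document; each statement's English description precedes it below -/
import Mathlib

section
/- Let d ≥ 3. Define U ⊆ ℂ^{d−1} as the set of parameters (c,a) for which there exist a proper subset S ⊊ {0,…,d−2} (possibly empty) and an enumeration j_1,…,j_m of the complement {0,…,d−2}∖S (so m = d−1−|S| ≥ 1) such that g_{c,a}(c_i) < g_{c,a}(c_{j_1}) for every i ∈ S, and g_{c,a}(c_{j_1}) < g_{c,a}(c_{j_2}) < ⋯ < g_{c,a}(c_{j_m}). Then U is an open subset of ℂ^{d−1}, U is contained in ℂ^{d−1}∖C_d, and U is dense in ℂ^{d−1}∖C_d (every point of ℂ^{d−1}∖C_d is in the closure of U). -/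
open Filter Topology MeasureTheory

/-- Elementary symmetric polynomial of degree `m` in the values of `c`. -/
noncomputable def sigmaE {n : ℕ} (c : Fin n → ℂ) (m : ℕ) : ℂ :=
  (Multiset.map c Finset.univ.val).esymm m

/-- The polynomial `P_{c,a}`. -/
noncomputable def Pca (d : ℕ) (c : Fin (d - 2) → ℂ) (a : ℂ) (z : ℂ) : ℂ :=
  z ^ d / (d : ℂ) +
    (∑ j ∈ Finset.Icc 2 (d - 1), (-1 : ℂ) ^ (d - j) * sigmaE c (d - j) * z ^ j / (j : ℂ)) +
    a ^ d

/-- The critical points `c₀ = 0, c₁, …, c_{d-2}` of `P_{c,a}`. -/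
noncomputable def critPt {d : ℕ} (c : Fin (d - 2) → ℂ) (i : Fin (d - 1)) : ℂ :=
  if h : (i : ℕ) = 0 then 0 else c ⟨(i : ℕ) - 1, by have := i.isLt; omega⟩

/-- The orbit of `z` under `P_{c,a}` is bounded. -/
def boundedOrbit (d : ℕ) (c : Fin (d - 2) → ℂ) (a z : ℂ) : Prop :=
  Bornology.IsBounded (Set.range fun n => (Pca d c a)^[n] z)

/-- The Green function of `P_{c,a}`. -/
noncomputable def green (d : ℕ) (c : Fin (d - 2) → ℂ) (a z : ℂ) : ℝ :=
  limUnder atTop (fun n : ℕ => Real.log (max 1 ‖(Pca d c a)^[n] z‖) / (d : ℝ) ^ n)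

/-- `G(c,a)`, the max of the Green function over the critical points. -/
noncomputable def Gmax (d : ℕ) (c : Fin (d - 2) → ℂ) (a : ℂ) : ℝ :=
  ⨆ i : Fin (d - 1), green d c a (critPt c i)

/-- The connectedness locus `C_d`. -/
def connLocus (d : ℕ) : Set ((Fin (d - 2) → ℂ) × ℂ) :=
  {p | ∀ i : Fin (d - 1), boundedOrbit d p.1 p.2 (critPt p.1 i)}

/-- The filled-in Julia set of `P_{c,a}`. -/
def filledJulia (d : ℕ) (c : Fin (d - 2) → ℂ) (a : ℂ) : Set ℂ :=
  {z | boundedOrbit d c a z}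

/-- The open set `U`: parameters admitting a proper subset `S` of the critical indices and an
enumeration `j` of its complement along which the critical Green values strictly increase, all
values over `S` being smaller than the first one. -/
def Uset (d : ℕ) : Set ((Fin (d - 2) → ℂ) × ℂ) :=
  {p | ∃ S : Finset (Fin (d - 1)), S ≠ Finset.univ ∧
    ∃ m : ℕ, ∃ hm : 1 ≤ m, ∃ j : Fin m → Fin (d - 1),
      Function.Injective j ∧ Set.range j = (↑(Sᶜ) : Set (Fin (d - 1))) ∧
      (∀ i ∈ S, green d p.1 p.2 (critPt p.1 i) < green d p.1 p.2 (critPt p.1 (j ⟨0, hm⟩))) ∧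
      StrictMono fun k : Fin m => green d p.1 p.2 (critPt p.1 (j k))}


abbrev XX (d : ℕ) := (Fin (d - 2) → ℂ) × ℂ

noncomputable def Qn (d : ℕ) (i : Fin (d - 1)) (n : ℕ) (p : XX d) : ℂ :=
  (Pca d p.1 p.2)^[n] (critPt p.1 i)

noncomputable def hh (d : ℕ) (i : Fin (d - 1)) (p : XX d) : ℝ :=
  green d p.1 p.2 (critPt p.1 i)

noncomputable def ll (z : ℂ) : ℝ := Real.log (max 1 ‖z‖)

lemma sigmaE_eq {n : ℕ} (c : Fin n → ℂ) (m : ℕ) :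
    sigmaE c m = ∑ t ∈ (Finset.univ : Finset (Fin n)).powersetCard m, ∏ i ∈ t, c i := by
  unfold sigmaE
  rw [Finset.esymm_map_val]

lemma diff_sigmaE {n : ℕ} (m : ℕ) : Differentiable ℂ (fun c : Fin n → ℂ => sigmaE c m) := by
  simp only [sigmaE_eq]
  fun_prop

lemma diff_Pca (d : ℕ) : Differentiable ℂ (fun q : XX d × ℂ => Pca d q.1.1 q.1.2 q.2) := by
  unfold Pca
  have h : ∀ m, Differentiable ℂ (fun q : XX d × ℂ => sigmaE q.1.1 m) := fun m =>
    (diff_sigmaE m).comp (by fun_prop : Differentiable ℂ (fun q : XX d × ℂ => q.1.1))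
  fun_prop

lemma diff_critPt (d : ℕ) (i : Fin (d - 1)) : Differentiable ℂ (fun p : XX d => critPt p.1 i) := by
  unfold critPt
  split_ifs <;> fun_prop

lemma Qn_succ (d : ℕ) (i : Fin (d - 1)) (n : ℕ) (p : XX d) :
    Qn d i (n + 1) p = Pca d p.1 p.2 (Qn d i n p) := by
  unfold Qn; rw [Function.iterate_succ_apply']

lemma diff_Qn (d : ℕ) (i : Fin (d - 1)) (n : ℕ) : Differentiable ℂ (Qn d i n) := by
  induction n with
  | zero => exact diff_critPt d i
  | succ n ih =>
    have : Qn d i (n + 1) = (fun q : XX d × ℂ => Pca d q.1.1 q.1.2 q.2) ∘ fun p => (p, Qn d i n p) := by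
      funext p; simp [Qn_succ]
    rw [this]
    exact (diff_Pca d).comp (by fun_prop)

lemma sigmaE_smul {n : ℕ} (t : ℂ) (c : Fin n → ℂ) (m : ℕ) :
    sigmaE (t • c) m = t ^ m * sigmaE c m := by
  rw [sigmaE_eq, sigmaE_eq, Finset.mul_sum]
  refine Finset.sum_congr rfl fun s hs => ?_
  rw [Finset.mem_powersetCard] at hs
  simp [Finset.prod_mul_distrib, hs.2]

lemma Pca_smul (d : ℕ) (t : ℂ) (p : XX d) (z : ℂ) :
    Pca d (t • p).1 (t • p).2 (t * z) = t ^ d * Pca d p.1 p.2 z := by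
  unfold Pca
  rw [mul_add, mul_add, Finset.mul_sum]
  congr 1
  · congr 1
    · rw [mul_pow]; ring
    · refine Finset.sum_congr rfl fun j hj => ?_
      rw [Finset.mem_Icc] at hj
      have : t ^ d = t ^ (d - j) * t ^ j := by rw [← pow_add]; congr 1; omega
      rw [Prod.smul_fst, sigmaE_smul, this, mul_pow]; ring
  · rw [Prod.smul_snd, smul_eq_mul, mul_pow]

lemma critPt_smul (d : ℕ) (t : ℂ) (c : Fin (d - 2) → ℂ) (i : Fin (d - 1)) :
    critPt (t • c) i = t * critPt c i := by
  unfold critPt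
  split_ifs <;> simp

lemma Pca_zero (d : ℕ) : Pca d 0 0 1 = if d = 0 then 1 else 1 / (d : ℂ) := by
  unfold Pca
  have : ∀ m, m ≠ 0 → sigmaE (0 : Fin (d-2) → ℂ) m = 0 := by
    intro m hm
    have := sigmaE_smul (0:ℂ) (0 : Fin (d-2) → ℂ) m
    simpa [hm] using this
  rw [Finset.sum_eq_zero]
  · split_ifs with h <;> simp [h]
  · intro j hj
    rw [Finset.mem_Icc] at hj
    rw [this _ (by omega)]; simp

lemma esc (d : ℕ) (hd : 3 ≤ d) : ∃ K : ℝ, 4 * d ≤ K ∧ ∀ (p : XX d) (z : ℂ),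
    K * (1 + ‖p‖) ≤ ‖z‖ → ‖d * Pca d p.1 p.2 z / z ^ d - 1‖ ≤ 1 / 2 := by
  have hc : Continuous (fun p : XX d => (d : ℂ) * Pca d p.1 p.2 1) :=
    continuous_const.mul ((diff_Pca d).continuous.comp (by fun_prop : Continuous fun p : XX d => (p, (1:ℂ))))
  have h0 : (d : ℂ) * Pca d (0 : XX d).1 (0 : XX d).2 1 = 1 := by
    have h : (d:ℂ) ≠ 0 := by norm_cast; omega
    simp only [Prod.fst_zero, Prod.snd_zero]
    rw [Pca_zero, if_neg (by omega)]
    field_simp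
  obtain ⟨ε, hε, H⟩ := Metric.continuousAt_iff.1 (hc.continuousAt (x := (0 : XX d))) (1/2) (by norm_num)
  refine ⟨max (4 * d) (1 / ε), le_max_left _ _, fun p z hz => ?_⟩
  have hd' : (3:ℝ) ≤ d := by exact_mod_cast hd
  have hz0 : 0 < ‖z‖ := by
    refine lt_of_lt_of_le ?_ hz
    have := le_max_left (4 * (d:ℝ)) (1 / ε)
    have := norm_nonneg p
    positivity
  have hzz : z ≠ 0 := norm_pos_iff.1 hz0
  have h1 := Pca_smul d z (z⁻¹ • p) 1
  rw [smul_smul, mul_inv_cancel₀ hzz, one_smul, mul_one] at h1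
  have h2 : ‖z⁻¹ • p‖ < ε := by
    rw [norm_smul, norm_inv, inv_mul_lt_iff₀ hz0]
    have h3 : 1 / ε * (1 + ‖p‖) ≤ ‖z‖ := le_trans (by
      have := norm_nonneg p
      gcongr; exact le_max_right _ _) hz
    rw [div_mul_eq_mul_div, one_mul, div_le_iff₀ hε] at h3
    linarith
  have h3 := H (x := z⁻¹ • p) (by simpa using h2)
  rw [h0, dist_eq_norm] at h3
  rw [h1]
  have : (d : ℂ) * (z ^ d * Pca d (z⁻¹ • p).1 (z⁻¹ • p).2 1) / z ^ d = (d : ℂ) * Pca d (z⁻¹ • p).1 (z⁻¹ • p).2 1 := by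
    field_simp
  rw [this]
  exact h3.le

noncomputable def KK (d : ℕ) : ℝ := if hd : 3 ≤ d then (esc d hd).choose else 0

lemma KK_le {d : ℕ} (hd : 3 ≤ d) : 4 * (d:ℝ) ≤ KK d := by
  unfold KK; rw [dif_pos hd]; exact (esc d hd).choose_spec.1

lemma KK_esc {d : ℕ} (hd : 3 ≤ d) {A : ℝ} {p : XX d} (hp : ‖p‖ ≤ A) {z : ℂ}
    (hz : KK d * (1 + A) ≤ ‖z‖) : ‖d * Pca d p.1 p.2 z / z ^ d - 1‖ ≤ 1 / 2 := by
  have h := KK_le hd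
  unfold KK at h hz; rw [dif_pos hd] at h hz
  refine (esc d hd).choose_spec.2 p z (le_trans ?_ hz)
  have : (0:ℝ) ≤ (esc d hd).choose := le_trans (by positivity) h
  gcongr

lemma KK_big {d : ℕ} (hd : 3 ≤ d) {A : ℝ} {p : XX d} (hp : ‖p‖ ≤ A) {z : ℂ}
    (hz : KK d * (1 + A) ≤ ‖z‖) : 4 * (d:ℝ) ≤ ‖z‖ := by
  have h := KK_le hd
  have hA := (norm_nonneg p).trans hp
  have hd' : (3:ℝ) ≤ d := by exact_mod_cast hd
  nlinarith

lemma P_lower {d : ℕ} (hd : 3 ≤ d) {A : ℝ} {p : XX d} (hp : ‖p‖ ≤ A) {z : ℂ}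
    (hz : KK d * (1 + A) ≤ ‖z‖) : ‖z‖ ^ d / (2 * d) ≤ ‖Pca d p.1 p.2 z‖ ∧
      ‖Pca d p.1 p.2 z‖ ≤ ‖z‖ ^ d ∧ 2 * ‖z‖ ≤ ‖Pca d p.1 p.2 z‖ := by
  have h1 := KK_esc hd hp hz
  have h2 := KK_big hd hp hz
  have hd' : (3:ℝ) ≤ d := by exact_mod_cast hd
  have hz0 : 0 < ‖z‖ := by linarith
  have hzd : 0 < ‖z‖ ^ d := by positivity
  set w := (d:ℂ) * Pca d p.1 p.2 z / z ^ d with hw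
  have hn : ‖w‖ = d * ‖Pca d p.1 p.2 z‖ / ‖z‖ ^ d := by
    rw [hw, norm_div, norm_mul, norm_pow]; simp
  have hl : 1 / 2 ≤ ‖w‖ := by
    have := norm_sub_norm_le (1:ℂ) w
    rw [norm_sub_rev, norm_one] at this; linarith
  have hu : ‖w‖ ≤ 3 / 2 := by
    have := norm_sub_norm_le w (1:ℂ)
    rw [norm_one] at this; linarith
  rw [hn, le_div_iff₀ hzd] at hl
  rw [hn, div_le_iff₀ hzd] at hu
  have hlow : ‖z‖ ^ d / (2 * d) ≤ ‖Pca d p.1 p.2 z‖ := by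
    rw [div_le_iff₀ (by positivity)]; linarith
  refine ⟨hlow, by nlinarith, le_trans ?_ hlow⟩
  rw [le_div_iff₀ (by positivity)]
  have : ‖z‖ ^ 2 ≤ ‖z‖ ^ d := pow_le_pow_right₀ (by linarith) (by omega)
  nlinarith

lemma P_inv {d : ℕ} (hd : 3 ≤ d) {A : ℝ} {p : XX d} (hp : ‖p‖ ≤ A) {i : Fin (d - 1)} {N : ℕ}
    (hz : KK d * (1 + A) ≤ ‖Qn d i N p‖) (k : ℕ) : KK d * (1 + A) ≤ ‖Qn d i (N + k) p‖ := by
  induction k with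
  | zero => exact hz
  | succ k ih =>
    rw [← add_assoc, Qn_succ]
    have := (P_lower hd hp ih).2.2
    have := norm_nonneg (Qn d i (N + k) p)
    linarith

lemma ll_nonneg (z : ℂ) : 0 ≤ ll z := Real.log_nonneg (le_max_left _ _)

lemma ll_cont : Continuous ll := by
  unfold ll
  exact Continuous.log (by fun_prop) (fun z => by positivity)

lemma ll_of_le {z : ℂ} (h : 1 ≤ ‖z‖) : ll z = Real.log ‖z‖ := by
  unfold ll; rw [max_eq_right h]

lemma ll_step {d : ℕ} (hd : 3 ≤ d) (A : ℝ) : ∃ C : ℝ, 0 ≤ C ∧ ∀ (p : XX d) (z : ℂ), ‖p‖ ≤ A →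
    |ll (Pca d p.1 p.2 z) - d * ll z| ≤ C := by
  have hcont : Continuous (fun q : XX d × ℂ => ll (Pca d q.1.1 q.1.2 q.2) - d * ll q.2) :=
    (ll_cont.comp (diff_Pca d).continuous).sub (continuous_const.mul (ll_cont.comp continuous_snd))
  obtain ⟨C, hC⟩ := ((isCompact_closedBall (0 : XX d) A).prod
    (isCompact_closedBall (0:ℂ) (KK d * (1 + A)))).exists_bound_of_continuousOn hcont.continuousOn
  have hd' : (3:ℝ) ≤ d := by exact_mod_cast hd
  have hl2 : 0 ≤ Real.log (2 * d) := Real.log_nonneg (by linarith)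
  refine ⟨max C (Real.log (2 * d)), le_max_of_le_right hl2, fun p z hp => ?_⟩
  rcases le_total (KK d * (1 + A)) ‖z‖ with hz | hz
  · refine le_max_of_le_right ?_
    obtain ⟨h1, h2, h3⟩ := P_lower hd hp hz
    have h4 := KK_big hd hp hz
    have hz0 : 0 < ‖z‖ := by linarith
    rw [ll_of_le (by linarith), ll_of_le (by linarith)]
    have h5 := Real.log_le_log (by positivity) h1
    have h6 := Real.log_le_log (by linarith) h2
    rw [Real.log_div (by positivity) (by positivity), Real.log_pow] at h5
    rw [Real.log_pow] at h6
    rw [abs_le]; constructor <;> linarith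
  · refine le_max_of_le_left ?_
    exact hC (p, z) ⟨by simpa using hp, by simpa using hz⟩

noncomputable def uu (d : ℕ) (i : Fin (d - 1)) (n : ℕ) (p : XX d) : ℝ :=
  ll (Qn d i n p) / (d:ℝ) ^ n

lemma uu_step {d : ℕ} (hd : 3 ≤ d) (A : ℝ) : ∃ C : ℝ, 0 ≤ C ∧ ∀ (p : XX d) (i : Fin (d - 1)), ‖p‖ ≤ A →
    ∀ n, dist (uu d i n p) (uu d i (n + 1) p) ≤ C * (1 / 3) ^ n := by
  obtain ⟨C, hC0, hC⟩ := ll_step hd A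
  have hd' : (3:ℝ) ≤ d := by exact_mod_cast hd
  refine ⟨C, hC0, fun p i hp n => ?_⟩
  have h := hC p (Qn d i n p) hp
  rw [← Qn_succ] at h
  have : uu d i (n+1) p - uu d i n p = (ll (Qn d i (n+1) p) - d * ll (Qn d i n p)) / (d:ℝ) ^ (n+1) := by
    unfold uu; field_simp; ring
  rw [dist_comm, Real.dist_eq, this, abs_div, abs_of_pos (by positivity : (0:ℝ) < (d:ℝ)^(n+1)), one_div, inv_pow,
    ← div_eq_mul_inv]
  gcongr
  calc (3:ℝ)^n ≤ (d:ℝ)^n := by gcongr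
    _ ≤ (d:ℝ)^(n+1) := pow_le_pow_right₀ (by linarith) (by omega)

lemma uu_tendsto {d : ℕ} (hd : 3 ≤ d) (i : Fin (d - 1)) (p : XX d) :
    Tendsto (fun n => uu d i n p) atTop (𝓝 (hh d i p)) := by
  obtain ⟨C, hC0, hC⟩ := uu_step hd ‖p‖
  have : CauchySeq (fun n => uu d i n p) :=
    cauchySeq_of_le_geometric (1/3) C (by norm_num) (hC p i le_rfl)
  exact this.tendsto_limUnder

lemma hh_cont {d : ℕ} (hd : 3 ≤ d) (i : Fin (d - 1)) : Continuous (hh d i) := by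
  rw [continuous_iff_continuousAt]
  intro p
  obtain ⟨C, hC0, hC⟩ := uu_step hd (‖p‖ + 1)
  have hU : TendstoUniformlyOn (uu d i) (hh d i) atTop (Metric.ball p 1) := by
    rw [Metric.tendstoUniformlyOn_iff]
    intro ε hε
    have hlim : Tendsto (fun n : ℕ => C * (1/3:ℝ)^n / (1 - 1/3)) atTop (𝓝 0) := by
      have := ((tendsto_pow_atTop_nhds_zero_of_lt_one (r := (1/3:ℝ)) (by norm_num) (by norm_num)).const_mul C).div_const (1 - 1/3)
      simpa using this
    filter_upwards [hlim.eventually (gt_mem_nhds hε)] with n hn q hq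
    rw [dist_comm]
    refine lt_of_le_of_lt (dist_le_of_le_geometric_of_tendsto (1/3) C (by norm_num) (hC q i ?_) (uu_tendsto hd i q) n) hn
    rw [Metric.mem_ball, dist_eq_norm] at hq
    have := norm_sub_norm_le q p
    linarith
  have hc : ContinuousOn (hh d i) (Metric.ball p 1) := hU.continuousOn (Frequently.of_forall fun n => by
    apply Continuous.continuousOn
    exact (ll_cont.comp (diff_Qn d i n).continuous).div_const _)
  exact hc.continuousAt (Metric.ball_mem_nhds p one_pos)

lemma hh_nonneg {d : ℕ} (hd : 3 ≤ d) (i : Fin (d - 1)) (p : XX d) : 0 ≤ hh d i p :=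
  ge_of_tendsto' (uu_tendsto hd i p) fun n => div_nonneg (ll_nonneg _) (by positivity)

lemma hh_zero {d : ℕ} (hd : 3 ≤ d) (i : Fin (d - 1)) (p : XX d) (R : ℝ) (h : ∀ n, ‖Qn d i n p‖ ≤ R) :
    hh d i p = 0 := by
  refine tendsto_nhds_unique (uu_tendsto hd i p) ?_
  have hd' : (3:ℝ) ≤ d := by exact_mod_cast hd
  have h1 : Tendsto (fun n : ℕ => Real.log (max 1 R) / (d:ℝ)^n) atTop (𝓝 0) :=
    tendsto_const_nhds.div_atTop (tendsto_pow_atTop_atTop_of_one_lt (by linarith))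
  refine squeeze_zero (fun n => div_nonneg (ll_nonneg _) (by positivity)) (fun n => ?_) h1
  unfold uu ll
  gcongr
  exact h n

lemma hh_pos {d : ℕ} (hd : 3 ≤ d) {A : ℝ} {p : XX d} (hp : ‖p‖ ≤ A) {i : Fin (d - 1)} {N : ℕ}
    (hz : KK d * (1 + A) ≤ ‖Qn d i N p‖) : 0 < hh d i p := by
  have hd' : (3:ℝ) ≤ d := by exact_mod_cast hd
  have h4 := fun k => KK_big hd hp (P_inv hd hp hz k)
  have key : ∀ k, (d:ℝ)^k * (Real.log ‖Qn d i N p‖ - Real.log (2 * d)) ≤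
      Real.log ‖Qn d i (N + k) p‖ - Real.log (2 * d) := by
    intro k
    induction k with
    | zero => simp
    | succ k ih =>
      have h1 := (P_lower hd hp (P_inv hd hp hz k)).1
      have h2 := h4 k
      rw [← Qn_succ] at h1
      have hz0 : 0 < ‖Qn d i (N + k) p‖ := by linarith
      have h5 := Real.log_le_log (by positivity) h1
      rw [Real.log_div (by positivity) (by positivity), Real.log_pow] at h5
      have hl2 : 0 ≤ Real.log (2 * d) := Real.log_nonneg (by linarith)
      rw [pow_succ', mul_assoc]
      rw [← add_assoc]
      have h6 : (d:ℝ) * ((d:ℝ)^k * (Real.log ‖Qn d i N p‖ - Real.log (2 * d))) ≤ d * (Real.log ‖Qn d i (N + k) p‖ - Real.log (2 * d)) := by gcongr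
      nlinarith
  have h0 : 0 < Real.log ‖Qn d i N p‖ - Real.log (2 * d) := by
    have := h4 0
    rw [add_zero] at this
    have := Real.log_lt_log (x := 2 * (d:ℝ)) (by linarith) (lt_of_lt_of_le (by linarith) this)
    linarith
  have hlow : (Real.log ‖Qn d i N p‖ - Real.log (2 * d)) / (d:ℝ)^N ≤ hh d i p := by
    refine ge_of_tendsto (uu_tendsto hd i p) ?_
    filter_upwards [eventually_ge_atTop N] with n hn
    obtain ⟨k, rfl⟩ := Nat.exists_eq_add_of_le hn
    unfold uu
    rw [ll_of_le (by linarith [h4 k]), pow_add, div_le_div_iff₀ (by positivity) (by positivity)]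
    have hl2 : 0 ≤ Real.log (2 * d) := Real.log_nonneg (by linarith)
    have := key k
    calc _ = (d:ℝ)^N * ((d:ℝ)^k * (Real.log ‖Qn d i N p‖ - Real.log (2 * d))) := by ring
      _ ≤ (d:ℝ)^N * Real.log ‖Qn d i (N + k) p‖ := by gcongr; linarith
      _ = _ := by ring
  exact lt_of_lt_of_le (by positivity) hlow

lemma bdd_of_zero {d : ℕ} (hd : 3 ≤ d) {A : ℝ} {p : XX d} (hp : ‖p‖ ≤ A) {i : Fin (d - 1)}
    (h : hh d i p = 0) (n : ℕ) : ‖Qn d i n p‖ ≤ KK d * (1 + A) := by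
  by_contra hn
  push Not at hn
  exact (hh_pos hd hp hn.le).ne' h

lemma bo_iff {d : ℕ} (hd : 3 ≤ d) (p : XX d) (i : Fin (d - 1)) :
    boundedOrbit d p.1 p.2 (critPt p.1 i) ↔ hh d i p = 0 := by
  constructor
  · intro h
    obtain ⟨R, hR⟩ := h.exists_norm_le
    exact hh_zero hd i p R fun n => hR _ ⟨n, rfl⟩
  · intro h
    refine isBounded_iff_forall_norm_le.2 ⟨KK d * (1 + ‖p‖), ?_⟩
    rintro _ ⟨n, rfl⟩
    exact bdd_of_zero hd le_rfl h n

lemma hh_analytic {d : ℕ} (hd : 3 ≤ d) (i : Fin (d - 1)) (p0 v : XX d) (s0 : ℂ)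
    (h : 0 < hh d i (p0 + s0 • v)) : AnalyticAt ℝ (fun s : ℂ => hh d i (p0 + s • v)) s0 := by
  have hd' : (3:ℝ) ≤ d := by exact_mod_cast hd
  have hdc : (d:ℂ) ≠ 0 := by norm_cast; omega
  set A : ℝ := ‖p0‖ + (‖s0‖ + 1) * ‖v‖ with hA
  obtain ⟨N, hN⟩ : ∃ N, KK d * (1 + A) < ‖Qn d i N (p0 + s0 • v)‖ := by
    by_contra hcon
    push Not at hcon
    exact h.ne' (hh_zero hd i _ _ hcon)
  set q : ℕ → ℂ → ℂ := fun n s => Qn d i n (p0 + s • v) with hq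
  have hqd : ∀ n, Differentiable ℂ (q n) := fun n => (diff_Qn d i n).comp (by fun_prop)
  have hop : IsOpen {s | KK d * (1 + A) < ‖q N s‖} := isOpen_lt continuous_const (hqd N).continuous.norm
  obtain ⟨r', hr', hball'⟩ := Metric.isOpen_iff.1 hop s0 hN
  set r := min r' 1 with hr
  have hr0 : 0 < r := lt_min hr' one_pos
  have hLA : ∀ s ∈ Metric.ball s0 r, ‖p0 + s • v‖ ≤ A := by
    intro s hs
    rw [Metric.mem_ball, dist_eq_norm] at hs
    have h1 := norm_sub_norm_le s s0
    have h2 : ‖s‖ ≤ ‖s0‖ + 1 := by linarith [min_le_right r' 1]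
    calc ‖p0 + s • v‖ ≤ ‖p0‖ + ‖s‖ * ‖v‖ := by rw [← norm_smul]; exact norm_add_le _ _
      _ ≤ A := by rw [hA]; gcongr
  have hbig : ∀ s ∈ Metric.ball s0 r, ∀ k, KK d * (1 + A) ≤ ‖q (N + k) s‖ := fun s hs k =>
    P_inv hd (hLA s hs) (hball' (Metric.ball_subset_ball (min_le_left _ _) hs)).le k
  have hne1 : ∀ s ∈ Metric.ball s0 r, ∀ k, 1 ≤ ‖q (N + k) s‖ := fun s hs k => by
    linarith [KK_big hd (hLA s hs) (hbig s hs k)]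
  have hne : ∀ s ∈ Metric.ball s0 r, ∀ k, q (N + k) s ≠ 0 := fun s hs k => by
    rw [← norm_pos_iff]; linarith [hne1 s hs k]
  set w : ℕ → ℂ → ℂ := fun k s => d * q (N + k + 1) s / q (N + k) s ^ d with hw
  have hw1 : ∀ s ∈ Metric.ball s0 r, ∀ k, ‖w k s - 1‖ ≤ 1 / 2 := by
    intro s hs k
    have := KK_esc hd (hLA s hs) (hbig s hs k)
    simp only [hw, hq, Qn_succ]
    exact this
  set F : ℕ → ℂ → ℂ := fun k s => (Complex.log (w k s) - (Real.log d : ℝ)) / (d:ℂ) ^ (N + k + 1) with hF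
  have hFd : ∀ k, DifferentiableOn ℂ (F k) (Metric.ball s0 r) := by
    intro k s hs
    apply DifferentiableAt.differentiableWithinAt
    have h1 : DifferentiableAt ℂ (w k) s :=
      ((hqd _ s).const_mul _).div ((hqd _ s).pow d) (pow_ne_zero _ (hne s hs k))
    have h2 : w k s ∈ Complex.slitPlane := by
      left
      have h3 := Complex.abs_re_le_norm (w k s - 1)
      have h4 := hw1 s hs k
      rw [Complex.sub_re, Complex.one_re] at h3
      have := (abs_le.1 (h3.trans h4)).1
      linarith
    exact ((h1.clog h2).sub_const _).div_const _
  have hFb : ∀ k, ∀ s ∈ Metric.ball s0 r, ‖F k s‖ ≤ (1 + Real.log d) * (1/3:ℝ)^k := by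
    intro k s hs
    have h1 := Complex.norm_log_one_add_half_le_self (hw1 s hs k)
    rw [add_sub_cancel] at h1
    have h2 := hw1 s hs k
    have h3 : 0 ≤ Real.log d := Real.log_nonneg (by linarith)
    have h4 : ‖Complex.log (w k s) - (Real.log d : ℝ)‖ ≤ 1 + Real.log d := by
      refine (norm_sub_le _ _).trans ?_
      rw [Complex.norm_real, Real.norm_of_nonneg h3]
      linarith
    simp only [hF]
    rw [norm_div, norm_pow, Complex.norm_natCast, one_div, inv_pow, ← div_eq_mul_inv]
    gcongr
    calc (3:ℝ)^k ≤ (d:ℝ)^k := by gcongr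
      _ ≤ (d:ℝ)^(N+k+1) := pow_le_pow_right₀ (by linarith) (by omega)
  have hsum : Summable (fun k : ℕ => (1 + Real.log d) * (1/3:ℝ)^k) :=
    (summable_geometric_of_lt_one (by norm_num) (by norm_num)).mul_left _
  have hTd : DifferentiableOn ℂ (fun s => ∑' k, F k s) (Metric.ball s0 r) :=
    Complex.differentiableOn_tsum_of_summable_norm hsum hFd Metric.isOpen_ball hFb
  have hTa : AnalyticAt ℂ (fun s => ∑' k, F k s) s0 :=
    hTd.analyticAt (Metric.ball_mem_nhds s0 hr0)
  have hRe : AnalyticAt ℝ (fun s => (∑' k, F k s).re) s0 :=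
    (Complex.reCLM.analyticAt _).comp (hTa.restrictScalars (𝕜 := ℝ))
  have hlogq : AnalyticAt ℝ (fun s => Real.log ‖q N s‖) s0 := by
    have := (AnalyticAt.harmonicAt_log_norm ((hqd N).analyticAt s0) (hne s0 (Metric.mem_ball_self hr0) 0))
    exact HarmonicAt.analyticAt this
  have hmain : AnalyticAt ℝ (fun s => Real.log ‖q N s‖ * ((d:ℝ)^N)⁻¹ + (∑' k, F k s).re) s0 :=
    (hlogq.mul analyticAt_const).add hRe
  refine hmain.congr ?_
  filter_upwards [Metric.ball_mem_nhds s0 hr0] with s hs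
  have hS : Summable (fun k => F k s) := Summable.of_norm_bounded hsum fun k => hFb k s hs
  have hpart : ∀ k, uu d i (k + N) (p0 + s • v) = Real.log ‖q N s‖ * ((d:ℝ)^N)⁻¹ +
      ∑ m ∈ Finset.range k, (F m s).re := by
    intro k
    have e : ∀ k, uu d i (k + N) (p0 + s • v) = Real.log ‖q (N + k) s‖ / (d:ℝ)^(N + k) := by
      intro k
      unfold uu
      rw [add_comm k N]
      rw [ll_of_le (hne1 s hs k)]
    rw [e]
    induction k with
    | zero => simp [div_eq_mul_inv]
    | succ k ih =>
      rw [Finset.sum_range_succ, ← add_assoc (Real.log _ * _), ← ih]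
      have hpos1 : 0 < ‖q (N + k) s‖ := norm_pos_iff.2 (hne s hs k)
      have hpos2 : 0 < ‖q (N + k + 1) s‖ := norm_pos_iff.2 (hne s hs (k+1))
      have hre : (F k s).re = (Real.log ‖w k s‖ - Real.log d) / (d:ℝ)^(N + k + 1) := by
        simp only [hF]
        have : (d:ℂ) ^ (N + k + 1) = (((d:ℝ)^(N+k+1) : ℝ) : ℂ) := by push_cast; rfl
        rw [this, Complex.div_ofReal_re, Complex.sub_re, Complex.log_re, Complex.ofReal_re]
      have hlw : Real.log ‖w k s‖ = Real.log d + Real.log ‖q (N + k + 1) s‖ - d * Real.log ‖q (N + k) s‖ := by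
        simp only [hw]
        rw [norm_div, norm_mul, norm_pow, Complex.norm_natCast, Real.log_div (by positivity) (by positivity),
          Real.log_mul (by positivity) (by positivity), Real.log_pow]
      rw [hre, hlw, ← add_assoc N k 1]
      field_simp
      ring
  have hlim1 : Tendsto (fun k => uu d i (k + N) (p0 + s • v)) atTop (𝓝 (hh d i (p0 + s • v))) :=
    (tendsto_add_atTop_iff_nat N).2 (uu_tendsto hd i _)
  have hlim2 : Tendsto (fun k => uu d i (k + N) (p0 + s • v)) atTop
      (𝓝 (Real.log ‖q N s‖ * ((d:ℝ)^N)⁻¹ + (∑' k, F k s).re)) := by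
    simp only [hpart]
    refine tendsto_const_nhds.add ?_
    exact (Complex.hasSum_re hS.hasSum).tendsto_sum_nat
  exact tendsto_nhds_unique hlim2 hlim1

lemma outer_conn (ρ : ℝ) (hρ : 0 < ρ) : IsPreconnected {s : ℂ | ρ < ‖s‖} := by
  have : {s : ℂ | ρ < ‖s‖} = Complex.exp '' {z : ℂ | Real.log ρ < z.re} := by
    ext s
    constructor
    · intro hs
      have hs' : ρ < ‖s‖ := hs
      have h0 : s ≠ 0 := by rw [← norm_pos_iff]; linarith
      refine ⟨Complex.log s, ?_, Complex.exp_log h0⟩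
      rw [Set.mem_ofPred_eq, Complex.log_re]
      exact Real.log_lt_log hρ hs'
    · rintro ⟨z, hz, rfl⟩
      rw [Set.mem_ofPred_eq, Complex.norm_exp, ← Real.log_lt_iff_lt_exp hρ]
      exact hz
  rw [this]
  exact (convex_halfSpace_re_gt _).isPreconnected.image _ Complex.continuous_exp.continuousOn

/-- every component of the escape region on a line reaches the outer region -/
lemma comp_outer {d : ℕ} (hd : 3 ≤ d) (i : Fin (d - 1)) (p0 v : XX d) (ρ : ℝ) (hρ : 0 < ρ)
    (hout : ∀ s : ℂ, ρ < ‖s‖ → 0 < hh d i (p0 + s • v)) (s1 : ℂ) (hs1 : 0 < hh d i (p0 + s1 • v)) :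
    {s : ℂ | ρ < ‖s‖} ⊆ connectedComponentIn {s : ℂ | 0 < hh d i (p0 + s • v)} s1 := by
  set E := {s : ℂ | 0 < hh d i (p0 + s • v)} with hE
  have hcont : Continuous (fun s : ℂ => hh d i (p0 + s • v)) := (hh_cont hd i).comp (by fun_prop)
  have hEo : IsOpen E := isOpen_lt continuous_const hcont
  set C := connectedComponentIn E s1 with hC
  have hCo : IsOpen C := hEo.connectedComponentIn
  have hCE : C ⊆ E := connectedComponentIn_subset _ _
  have hs1C : s1 ∈ C := mem_connectedComponentIn hs1
  have hfr : ∀ z ∈ frontier C, hh d i (p0 + z • v) = 0 := by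
    intro z hz
    rw [hCo.frontier_eq] at hz
    by_contra hne
    have hzE : z ∈ E := lt_of_le_of_ne (hh_nonneg hd i _) (Ne.symm hne)
    have hpre : IsPreconnected (insert z C) :=
      isPreconnected_connectedComponentIn.subset_closure (Set.subset_insert _ _)
        (Set.insert_subset hz.1 subset_closure)
    exact hz.2 (hpre.subset_connectedComponentIn (Set.mem_insert_of_mem _ hs1C)
      (Set.insert_subset hzE hCE) (Set.mem_insert _ _))
  have hex : ∃ s ∈ C, ρ < ‖s‖ := by
    by_contra hcon
    push Not at hcon
    have hb : Bornology.IsBounded C := isBounded_iff_forall_norm_le.2 ⟨ρ, hcon⟩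
    have hcl : ∀ s ∈ closure C, ‖s‖ ≤ ρ := fun s hs =>
      closure_minimal (t := {s : ℂ | ‖s‖ ≤ ρ}) hcon (isClosed_le continuous_norm continuous_const) hs
    have hbound : ∀ n, ‖Qn d i n (p0 + s1 • v)‖ ≤ KK d * (1 + (‖p0‖ + ρ * ‖v‖)) := by
      intro n
      refine Complex.norm_le_of_forall_mem_frontier_norm_le (f := fun s : ℂ => Qn d i n (p0 + s • v)) hb
        (((diff_Qn d i n).comp (by fun_prop : Differentiable ℂ fun s : ℂ => p0 + s • v)).diffContOnCl) ?_
        (subset_closure hs1C)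
      intro z hz
      refine bdd_of_zero hd ?_ (hfr z hz) n
      refine (norm_add_le _ _).trans ?_
      rw [norm_smul]
      gcongr
      exact hcl z (frontier_subset_closure hz)
    exact hs1.ne' (hh_zero hd i _ _ hbound)
  obtain ⟨s, hsC, hs⟩ := hex
  rw [hC, connectedComponentIn_eq hsC]
  exact (outer_conn ρ hρ).subset_connectedComponentIn hs hout

lemma line_eq {d : ℕ} (hd : 3 ≤ d) (i j : Fin (d - 1)) (p0 v : XX d)
    (hout : ∀ᶠ s in Bornology.cobounded ℂ, 0 < hh d i (p0 + s • v))
    (h0 : 0 < hh d i p0) (heq : ∀ᶠ p in 𝓝 p0, hh d i p = hh d j p) (h1 : 0 < hh d i (p0 + v)) :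
    hh d i (p0 + v) = hh d j (p0 + v) := by
  obtain ⟨ρ', hρ'⟩ : ∃ ρ' : ℝ, ∀ s : ℂ, ρ' < ‖s‖ → 0 < hh d i (p0 + s • v) := by
    rw [← comap_norm_atTop, eventually_comap] at hout
    obtain ⟨ρ, h⟩ := eventually_atTop.1 hout
    exact ⟨ρ, fun s hs => h _ hs.le s rfl⟩
  set ρ := max ρ' 1
  have hρ : 0 < ρ := lt_max_of_lt_right one_pos
  have hout' : ∀ s : ℂ, ρ < ‖s‖ → 0 < hh d i (p0 + s • v) := fun s hs =>
    hρ' s (lt_of_le_of_lt (le_max_left _ _) hs)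
  set E := {s : ℂ | 0 < hh d i (p0 + s • v)} with hE
  have c0 := comp_outer hd i p0 v ρ hρ hout' 0 (by simpa using h0)
  have c1 := comp_outer hd i p0 v ρ hρ hout' 1 (by simpa using h1)
  have hmem : ((ρ + 1 : ℝ) : ℂ) ∈ {s : ℂ | ρ < ‖s‖} := by
    rw [Set.mem_ofPred_eq, Complex.norm_real, Real.norm_of_nonneg (by linarith)]; linarith
  have e : connectedComponentIn E 0 = connectedComponentIn E 1 :=
    (connectedComponentIn_eq (c0 hmem)).trans (connectedComponentIn_eq (c1 hmem)).symm
  have m1 : (1:ℂ) ∈ connectedComponentIn E 0 := by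
    rw [e]; exact mem_connectedComponentIn (by simpa [hE] using h1)
  have m0 : (0:ℂ) ∈ connectedComponentIn E 0 := mem_connectedComponentIn (by simpa [hE] using h0)
  set f := fun s : ℂ => hh d i (p0 + s • v) with hf
  set g := fun s : ℂ => hh d j (p0 + s • v) with hg
  have hfc : Continuous f := (hh_cont hd i).comp (by fun_prop)
  have hgc : Continuous g := (hh_cont hd j).comp (by fun_prop)
  set u := {s : ℂ | f =ᶠ[𝓝 s] g} with hu
  have huo : IsOpen u := isOpen_setOfPred_eventually_nhds
  have h0u : (0:ℂ) ∈ u := by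
    have hc : ContinuousAt (fun s : ℂ => p0 + s • v) 0 := by fun_prop
    have : Tendsto (fun s : ℂ => p0 + s • v) (𝓝 0) (𝓝 p0) := by simpa [ContinuousAt] using hc
    exact this.eventually heq
  have hsub : connectedComponentIn E 0 ⊆ u := by
    refine isPreconnected_connectedComponentIn.subset_of_closure_inter_subset huo ⟨0, m0, h0u⟩ ?_
    rintro s ⟨hs, hsC⟩
    have hsE' : s ∈ E := connectedComponentIn_subset _ _ hsC
    have hsE : 0 < f s := hsE'
    have hfg : f s = g s :=
      closure_minimal (t := {s | f s = g s}) (fun x hx => Eventually.self_of_nhds (p := fun y => f y = g y) hx)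
        (isClosed_eq hfc hgc) hs
    have haf : AnalyticAt ℝ f s := hh_analytic hd i p0 v s hsE
    have hag : AnalyticAt ℝ g s := hh_analytic hd j p0 v s (hfg ▸ hsE : 0 < g s)
    obtain ⟨r, hr, hball⟩ := Metric.eventually_nhds_iff_ball.1 (haf.eventually_analyticAt.and hag.eventually_analyticAt)
    obtain ⟨y, hyb, hyu⟩ := mem_closure_iff.1 hs (Metric.ball s r) Metric.isOpen_ball (Metric.mem_ball_self hr)
    have hE := AnalyticOnNhd.eqOn_of_preconnected_of_eventuallyEq (𝕜 := ℝ) (f := f) (g := g) (U := Metric.ball s r)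
      (fun x hx => (hball x hx).1) (fun x hx => (hball x hx).2) Metric.isPreconnected_ball hyb hyu
    filter_upwards [Metric.ball_mem_nhds s hr] with x hx using hE hx
  have := (hsub m1).self_of_nhds
  simpa [hf, hg] using this

lemma Q1_smul (d : ℕ) (i : Fin (d - 1)) (t : ℂ) (p : XX d) :
    Qn d i 1 (t • p) = t ^ d * Qn d i 1 p := by
  have := Pca_smul d t p (critPt p.1 i)
  rw [← critPt_smul] at this
  simpa [Qn] using this

lemma inf1 {d : ℕ} (i : Fin (d - 1)) (p0 v : XX d) (hv : Qn d i 1 v ≠ 0) :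
    ∀ᶠ s in Bornology.cobounded ℂ, ‖Qn d i 1 v‖ / 2 * ‖s‖ ^ d ≤ ‖Qn d i 1 (p0 + s • v)‖ := by
  have h1 : Tendsto (fun s : ℂ => Qn d i 1 (s⁻¹ • p0 + v)) (Bornology.cobounded ℂ) (𝓝 (Qn d i 1 v)) := by
    have hc : Continuous (fun u : ℂ => Qn d i 1 (u • p0 + v)) :=
      (diff_Qn d i 1).continuous.comp (by fun_prop)
    have := (hc.tendsto 0).comp (tendsto_inv₀_cobounded (α := ℂ))
    simpa [Function.comp_def] using this
  have hpos : 0 < ‖Qn d i 1 v‖ := norm_pos_iff.2 hv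
  filter_upwards [h1.norm.eventually (lt_mem_nhds (half_lt_self hpos)),
    (tendsto_norm_cobounded_atTop (E := ℂ)).eventually_ge_atTop 1] with s hs hs1
  have hs0 : s ≠ 0 := by rw [← norm_pos_iff]; linarith
  have : p0 + s • v = s • (s⁻¹ • p0 + v) := by rw [smul_add, smul_smul, mul_inv_cancel₀ hs0, one_smul]
  rw [this, Q1_smul, norm_mul, norm_pow, mul_comm]
  gcongr

lemma inf2 {d : ℕ} (hd : 3 ≤ d) (i : Fin (d - 1)) (p0 v : XX d) (hv : Qn d i 1 v ≠ 0) :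
    ∀ᶠ s in Bornology.cobounded ℂ, 0 < hh d i (p0 + s • v) := by
  have hpos : 0 < ‖Qn d i 1 v‖ := norm_pos_iff.2 hv
  have hK := KK_le hd
  have hd' : (3:ℝ) ≤ d := by exact_mod_cast hd
  filter_upwards [inf1 i p0 v hv,
    (tendsto_norm_cobounded_atTop (E := ℂ)).eventually_ge_atTop 1,
    (tendsto_norm_cobounded_atTop (E := ℂ)).eventually_ge_atTop
      (KK d * (1 + ‖p0‖ + ‖v‖) / (‖Qn d i 1 v‖ / 2))] with s h1 h2 h3
  refine hh_pos hd le_rfl (N := 1) (le_trans ?_ h1)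
  rw [div_le_iff₀ (by positivity)] at h3
  have h4 : ‖p0 + s • v‖ ≤ ‖p0‖ + ‖s‖ * ‖v‖ := by rw [← norm_smul]; exact norm_add_le _ _
  have h5 : 1 + ‖p0 + s • v‖ ≤ (1 + ‖p0‖ + ‖v‖) * ‖s‖ := by
    nlinarith [norm_nonneg p0, norm_nonneg v]
  have h6 : ‖s‖ ^ 2 ≤ ‖s‖ ^ d := pow_le_pow_right₀ h2 (by omega)
  calc KK d * (1 + ‖p0 + s • v‖) ≤ KK d * ((1 + ‖p0‖ + ‖v‖) * ‖s‖) := by gcongr; linarith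
    _ = (KK d * (1 + ‖p0‖ + ‖v‖)) * ‖s‖ := by ring
    _ ≤ (‖s‖ * (‖Qn d i 1 v‖ / 2)) * ‖s‖ := by gcongr
    _ = ‖Qn d i 1 v‖ / 2 * ‖s‖ ^ 2 := by ring
    _ ≤ _ := by gcongr

lemma sigma_single {n : ℕ} (k : Fin n) (m : ℕ) (hm : 1 ≤ m) :
    sigmaE (Pi.single k (1:ℂ)) m = if m = 1 then 1 else 0 := by
  rw [sigmaE_eq]
  split_ifs with h
  · subst h
    rw [Finset.powersetCard_one]
    simp
  · refine Finset.sum_eq_zero fun t ht => ?_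
    rw [Finset.mem_powersetCard] at ht
    obtain ⟨x, hx, hxk⟩ := Finset.exists_mem_ne (by omega : 1 < t.card) k
    exact Finset.prod_eq_zero hx (by simp [hxk])

lemma target {d : ℕ} (hd : 3 ≤ d) (i : Fin (d - 1)) (hi : (i:ℕ) ≠ 0) : ∃ q : XX d,
    Qn d i 1 q ≠ 0 ∧ ∀ j ≠ i, ∀ t : ℂ, hh d j (t • q) = 0 := by
  set k : Fin (d - 2) := ⟨(i:ℕ) - 1, by have := i.isLt; omega⟩ with hk
  refine ⟨(Pi.single k 1, 0), ?_, ?_⟩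
  · have hc : critPt (Pi.single k (1:ℂ)) i = 1 := by
      unfold critPt; rw [dif_neg hi]; simp [hk]
    have : Qn d i 1 (Pi.single k 1, 0) = 1 / (d:ℂ) - 1 / ((d - 1 : ℕ) : ℂ) := by
      simp only [Qn, Function.iterate_one, hc]
      unfold Pca
      rw [Finset.sum_eq_single (d - 1)]
      · rw [sigma_single _ _ (by omega), show d - (d - 1) = 1 by omega]
        simp [show d ≠ 0 by omega]
        ring
      · intro b hb hb'
        rw [Finset.mem_Icc] at hb
        rw [sigma_single _ _ (by omega), if_neg (by omega)]; simp
      · intro h; exact absurd (Finset.mem_Icc.2 ⟨by omega, le_rfl⟩) h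
    rw [this]
    intro h0
    have h1 : (d:ℂ) ≠ 0 := by norm_cast; omega
    have h2 : ((d-1:ℕ):ℂ) ≠ 0 := by norm_cast; omega
    rw [sub_eq_zero, div_eq_div_iff h1 h2, one_mul, one_mul] at h0
    have : d - 1 = d := by exact_mod_cast h0
    omega
  · intro j hj t
    have hc : critPt (Pi.single k (1:ℂ)) j = 0 := by
      unfold critPt
      split_ifs with h
      · rfl
      · apply Pi.single_eq_of_ne
        intro h'
        rw [hk, Fin.mk.injEq] at h'
        exact hj (Fin.ext (by omega))
    have hz : ∀ n, Qn d j n (t • ((Pi.single k 1, 0) : XX d)) = 0 := by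
      intro n
      induction n with
      | zero =>
        simp only [Qn, Function.iterate_zero, id]
        rw [Prod.smul_fst, critPt_smul, hc, mul_zero]
      | succ n ih =>
        rw [Qn_succ, ih]
        unfold Pca
        rw [Finset.sum_eq_zero]
        · simp [show d ≠ 0 by omega]
        · intro b hb
          rw [Finset.mem_Icc] at hb
          simp [show b ≠ 0 by omega]
    exact hh_zero hd j _ 0 fun n => by rw [hz]; simp

lemma key0 {d : ℕ} (hd : 3 ≤ d) (i j : Fin (d - 1)) (hij : j ≠ i) (hi : (i:ℕ) ≠ 0) (p0 : XX d)
    (h0 : 0 < hh d i p0) : ¬ ∀ᶠ p in 𝓝 p0, hh d i p = hh d j p := by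
  intro heq
  obtain ⟨q, hq, hq0⟩ := target hd i hi
  have hpos : 0 < ‖Qn d i 1 q‖ := norm_pos_iff.2 hq
  obtain ⟨t, ht1, ht2, ht3⟩ := ((inf2 hd i 0 q hq).and ((inf1 i (-p0) q hq).and
    ((tendsto_norm_cobounded_atTop (E := ℂ)).eventually_ge_atTop 1))).exists
  rw [zero_add] at ht1
  have hv : Qn d i 1 (-p0 + t • q) ≠ 0 := by
    rw [← norm_pos_iff]
    exact lt_of_lt_of_le (by positivity) ht2
  have e : p0 + (-p0 + t • q) = t • q := by abel
  have := line_eq hd i j p0 (-p0 + t • q) (inf2 hd i p0 _ hv) h0 heq (by rw [e]; exact ht1)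
  rw [e, hq0 j hij t] at this
  exact ht1.ne' this

lemma key {d : ℕ} (hd : 3 ≤ d) (i j : Fin (d - 1)) (hij : j ≠ i) (p0 : XX d)
    (h0 : 0 < hh d i p0) : ¬ ∀ᶠ p in 𝓝 p0, hh d i p = hh d j p := by
  by_cases hi : (i:ℕ) = 0
  · intro heq
    have hj : (j:ℕ) ≠ 0 := fun h => hij (Fin.ext (by omega))
    have := heq.self_of_nhds
    exact key0 hd j i hij.symm hj p0 (this ▸ h0) (heq.mono fun p hp => hp.symm)
  · exact key0 hd i j hij hi p0 h0

lemma mem_U {d : ℕ} (hd : 3 ≤ d) (p : XX d) :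
    p ∈ Uset d ↔ ∃ i0, ∀ i, i ≠ i0 → hh d i p < hh d i0 p := by
  constructor
  · rintro ⟨S, -, m, hm, j, -, hr, hS, hmono⟩
    have hmono' : StrictMono fun k : Fin m => hh d (j k) p := hmono
    refine ⟨j ⟨m - 1, by omega⟩, fun i hi => ?_⟩
    by_cases hiS : i ∈ S
    · have h1 : hh d i p < hh d (j ⟨0, hm⟩) p := hS i hiS
      exact h1.trans_le (hmono'.monotone (a := ⟨0, hm⟩) (b := ⟨m - 1, by omega⟩) (Nat.zero_le _))
    · have : i ∈ Set.range j := by rw [hr]; simpa using hiS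
      obtain ⟨k, rfl⟩ := this
      refine hmono' ?_
      have hk : k ≠ ⟨m - 1, by omega⟩ := fun h => hi (by rw [h])
      refine lt_of_le_of_ne ?_ hk
      have := k.isLt
      exact Fin.le_def.2 (by simp; omega)
  · rintro ⟨i0, h⟩
    refine ⟨{i0}ᶜ, ?_, 1, le_rfl, fun _ => i0, fun _ _ _ => Subsingleton.elim _ _, ?_, ?_, ?_⟩
    · intro h'
      have : i0 ∈ ({i0}ᶜ : Finset (Fin (d - 1))) := by rw [h']; simp
      simp at this
    · simp
    · intro i hi
      exact h i (by simpa using hi)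
    · exact Subsingleton.strictMono _

/-- `U` is open, contained in the complement of the connectedness locus, and dense in it. -/
theorem stmt7 (d : ℕ) (hd : 3 ≤ d) :
    IsOpen (Uset d) ∧ Uset d ⊆ (connLocus d)ᶜ ∧ (connLocus d)ᶜ ⊆ closure (Uset d) := by
  refine ⟨?_, ?_, ?_⟩
  · rw [isOpen_iff_mem_nhds]
    intro p hp
    obtain ⟨i0, h⟩ := (mem_U hd p).1 hp
    have : ∀ᶠ q in 𝓝 p, ∀ i, i ≠ i0 → hh d i q < hh d i0 q := by
      rw [eventually_all]
      intro i
      by_cases hi : i = i0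
      · exact Eventually.of_forall fun q hq => absurd hi hq
      · filter_upwards [(hh_cont hd i).continuousAt.eventually_lt (hh_cont hd i0).continuousAt (h i hi)] with q hq _ using hq
    filter_upwards [this] with q hq using (mem_U hd q).2 ⟨i0, hq⟩
  · intro p hp hc
    obtain ⟨i0, h⟩ := (mem_U hd p).1 hp
    have hz : ∀ i, hh d i p = 0 := fun i => (bo_iff hd p i).1 (hc i)
    have : Nontrivial (Fin (d - 1)) := Fin.nontrivial_iff_two_le.2 (by omega)
    obtain ⟨i, hi⟩ := exists_ne i0
    have := h i hi
    rw [hz, hz] at this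
    exact lt_irrefl _ this
  · intro p0 hp0
    have hex : ∃ i1, 0 < hh d i1 p0 := by
      by_contra hcon
      push Not at hcon
      exact hp0 fun i => (bo_iff hd p0 i).2 (le_antisymm (hcon i) (hh_nonneg hd i p0))
    obtain ⟨i1, hi1⟩ := hex
    rw [mem_closure_iff]
    intro V hV hpV
    -- minimise the number of indices attaining the maximum
    let T : XX d → Finset (Fin (d - 1)) := fun p =>
      Finset.univ.filter fun i => ∀ k, hh d k p ≤ hh d i p
    have hTne : ∀ p, (T p).Nonempty := by
      intro p
      obtain ⟨i, -, hi⟩ := Finset.exists_max_image (Finset.univ : Finset (Fin (d - 1)))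
        (fun i => hh d i p) ⟨i1, Finset.mem_univ _⟩
      exact ⟨i, by simp only [T, Finset.mem_filter, Finset.mem_univ, true_and]; exact fun k => hi k (Finset.mem_univ _)⟩
    let W : Set (XX d) := V ∩ {p | 0 < hh d i1 p}
    have hW : IsOpen W := hV.inter (isOpen_lt continuous_const (hh_cont hd i1))
    obtain ⟨q, hqW, hqmin⟩ : ∃ q ∈ W, ∀ q' ∈ W, (T q).card ≤ (T q').card := by
      have hne : W.Nonempty := ⟨p0, hpV, hi1⟩
      refine ⟨Function.argminOn (fun p => (T p).card) W hne, Function.argminOn_mem _ _ _, fun q' hq' => ?_⟩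
      exact Function.argminOn_le (fun p => (T p).card) W hq'
    have hsub : ∀ᶠ q' in 𝓝 q, T q' ⊆ T q := by
      have : ∀ᶠ q' in 𝓝 q, ∀ i, i ∉ T q → i ∉ T q' := by
        rw [eventually_all]
        intro i
        by_cases hi : i ∈ T q
        · exact Eventually.of_forall fun q' h => absurd hi h
        · have : ∃ k, hh d i q < hh d k q := by
            simpa [T] using hi
          obtain ⟨k, hk⟩ := this
          filter_upwards [(hh_cont hd i).continuousAt.eventually_lt (hh_cont hd k).continuousAt hk] with q' hq' _ hmem
          simp only [T, Finset.mem_filter, Finset.mem_univ, true_and] at hmem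
          exact absurd (hmem k) (not_le.2 hq')
      filter_upwards [this] with q' hq' i hi
      by_contra hcon
      exact hq' i hcon hi
    have hTeq : ∀ᶠ q' in 𝓝 q, T q' = T q := by
      filter_upwards [hsub, hW.mem_nhds hqW] with q' h1 h2
      exact Finset.eq_of_subset_of_card_le h1 (hqmin q' h2)
    refine ⟨q, hqW.1, (mem_U hd q).2 ?_⟩
    obtain ⟨i0, hi0⟩ := hTne q
    have hmem : ∀ p i, i ∈ T p → ∀ k, hh d k p ≤ hh d i p := by
      intro p i hi
      simpa [T] using hi
    refine ⟨i0, fun i hi => lt_of_le_of_ne (hmem q i0 hi0 i) fun heq => ?_⟩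
    have hiT : i ∈ T q := by
      simp only [T, Finset.mem_filter, Finset.mem_univ, true_and]
      intro k; rw [heq]; exact hmem q i0 hi0 k
    refine key hd i0 i hi q (lt_of_lt_of_le hqW.2 (hmem q i0 hi0 i1)) ?_
    filter_upwards [hTeq] with q' hq'
    have a1 : i ∈ T q' := by rw [hq']; exact hiT
    have a2 : i0 ∈ T q' := by rw [hq']; exact hi0
    exact le_antisymm (hmem q' i a1 i0) (hmem q' i0 a2 i)
end

section
/- Let d ≥ 3 and let U ⊆ ℂ^{d−1} be a connected component of the interior of the connectedness locus C_d. Assume there exist (c,a) ∈ U, z ∈ ℂ and an integer n ≥ 1 with P_{c,a}^{∘n}(z) = z and |(P_{c,a}^{∘n})'(z)| ≤ 1 (i.e. P_{c,a} has a non-repelling cycle). Then for every (c₀,a₀) in the closure of U, there exist z₀ ∈ ℂ and an integer m ≥ 1 with P_{c₀,a₀}^{∘m}(z₀) = z₀ and |(P_{c₀,a₀}^{∘m})'(z₀)| ≤ 1; in particular every parameter on the boundary of U has a non-repelling periodic point. -/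
open Filter Topology MeasureTheory

theorem lift_halfplane (G : Polynomial ℂ) (L : ℝ) (e : ℂ → ℂ) (he : Continuous e)
    (hav : ∀ w : ℂ, L < w.re → ∀ x, G.derivative.eval x = 0 → G.eval x ≠ e w)
    (w₀ : ℂ) (hw₀ : L < w₀.re) (x₀ : ℂ) (hx₀ : G.eval x₀ = e w₀) :
    ∃! F : C({w : ℂ | L < w.re}, ℂ), F ⟨w₀, hw₀⟩ = x₀ ∧ (fun x => G.eval x) ∘ F = fun w => e w.1 := by
  have hconv : Convex ℝ {w : ℂ | L < w.re} := convex_halfSpace_re_gt L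
  have hopen : IsOpen {w : ℂ | L < w.re} := isOpen_lt continuous_const Complex.continuous_re
  have := hconv.contractibleSpace ⟨w₀, hw₀⟩
  have := hopen.locallyPathConnectedSpace
  exact (G.isCoveringMapOn_eval).existsUnique_continuousMap_lifts
    (⟨fun w => e w.1, by fun_prop⟩ : C({w : ℂ | L < w.re}, ℂ)) (a₀ := ⟨w₀, hw₀⟩) (e₀ := x₀) hx₀
    (by
      rintro ⟨w, hw⟩ ⟨x, hx, hxe⟩
      exact hav w hw x hx hxe)

theorem branch_bound (G : Polynomial ℂ) (z : ℂ) (r M : ℝ) (hr : 0 < r) (hM : 0 ≤ M)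
    (hz : G.eval z = z) (hρ : G.derivative.eval z ≠ 0)
    (hcv : ∀ x, G.derivative.eval x = 0 → G.eval x = z ∨ r ≤ ‖G.eval x - z‖)
    (hb : ∀ x, ‖G.eval x - z‖ < r → ‖x - z‖ ≤ M) :
    ‖G.derivative.eval z‖⁻¹ ≤ M * Real.exp 1 / r := by
  set e : ℂ → ℂ := fun w => z + r * Complex.exp (-w) with hedef
  have hecont : Continuous e := by fun_prop
  have hen : ∀ w, ‖e w - z‖ = r * Real.exp (-w.re) := by
    intro w
    simp [hedef, Complex.norm_exp, abs_of_pos hr]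
  have hav : ∀ L : ℝ, 0 ≤ L → ∀ w : ℂ, L < w.re → ∀ x, G.derivative.eval x = 0 → G.eval x ≠ e w := by
    intro L hL w hw x hx hxe
    have h1 := hen w
    have h2 : Real.exp (-w.re) < 1 := by rw [Real.exp_lt_one_iff]; linarith
    have h3 := Real.exp_pos (-w.re)
    rcases hcv x hx with h | h
    · rw [← hxe, h, sub_self, norm_zero] at h1
      have := mul_pos hr h3
      linarith
    · rw [hxe, h1] at h
      nlinarith
  -- local inverse
  have hsd : HasStrictDerivAt (fun x => G.eval x) (G.derivative.eval z) z := G.hasStrictDerivAt z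
  have hsf := hsd.hasStrictFDerivAt_equiv hρ
  set φ := hsf.localInverse (fun x => G.eval x) _ z with hφ
  have hφz : φ z = z := by
    have := hsf.localInverse_apply_image
    rwa [hz] at this
  have hφd : HasStrictDerivAt φ (G.derivative.eval z)⁻¹ z := by
    have := hsd.to_localInverse hρ
    rw [hz] at this
    exact this
  have hφr : ∀ᶠ y in 𝓝 z, G.eval (φ y) = y := by
    have := hsf.eventually_right_inverse
    rwa [hz] at this
  have hφc : ∀ᶠ y in 𝓝 z, ContinuousAt φ y := by
    have h := (hsf.toOpenPartialHomeomorph (fun x => G.eval x))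
    have h1 : z ∈ (hsf.toOpenPartialHomeomorph (fun x => G.eval x)).target := by
      have := hsf.image_mem_toOpenPartialHomeomorph_target
      rwa [hz] at this
    filter_upwards [(hsf.toOpenPartialHomeomorph (fun x => G.eval x)).open_target.mem_nhds h1] with y hy
    exact (hsf.toOpenPartialHomeomorph (fun x => G.eval x)).continuousAt_symm hy
  obtain ⟨ε, hε, hball⟩ := Metric.eventually_nhds_iff.1 (hφr.and hφc)
  obtain ⟨L, hL0, hL⟩ : ∃ L : ℝ, 0 ≤ L ∧ r * Real.exp (-L) < ε := by
    have h1 : Tendsto (fun L : ℝ => r * Real.exp (-L)) atTop (𝓝 (r * 0)) :=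
      (Real.tendsto_exp_neg_atTop_nhds_zero).const_mul r
    rw [mul_zero] at h1
    obtain ⟨L, h2, h3⟩ := ((h1.eventually (gt_mem_nhds hε)).and (eventually_ge_atTop 0)).exists
    exact ⟨L, h3, h2⟩
  have heball : ∀ w : ℂ, L < w.re → dist (e w) z < ε := by
    intro w hw
    rw [dist_eq_norm, hen]
    refine lt_trans ?_ hL
    have : Real.exp (-w.re) < Real.exp (-L) := Real.exp_lt_exp.2 (by linarith)
    exact mul_lt_mul_of_pos_left this hr
  set w₀ : ℂ := ((L + 1 : ℝ) : ℂ) with hw₀def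
  have hw₀L : L < w₀.re := by simp [hw₀def]
  have hw₀0 : 0 < w₀.re := by linarith
  have hx₀ : G.eval (φ (e w₀)) = e w₀ := (hball (heball w₀ hw₀L)).1
  obtain ⟨s, ⟨hs0, hs⟩, -⟩ := lift_halfplane G 0 e hecont (hav 0 le_rfl) w₀ hw₀0 _ hx₀
  -- uniqueness on the smaller half plane
  have hsφ : ∀ w : ℂ, ∀ hw : L < w.re, s ⟨w, hL0.trans_lt hw⟩ = φ (e w) := by
    let s1 : C({w : ℂ | L < w.re}, ℂ) :=
      ⟨fun w => s ⟨w.1, hL0.trans_lt w.2⟩, by fun_prop⟩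
    let s2 : C({w : ℂ | L < w.re}, ℂ) := ⟨fun w => φ (e w.1), by
      rw [continuous_iff_continuousAt]
      intro w
      have h1 : ContinuousAt φ (e w.1) := (hball (heball w.1 w.2)).2
      exact ContinuousAt.comp (f := fun w : {w : ℂ | L < w.re} => e w.1) h1 (by fun_prop)⟩
    have h12 : s1 = s2 := (lift_halfplane G L e hecont (hav L hL0) w₀ hw₀L _ hx₀).unique
      ⟨hs0, by
        funext w
        exact congrFun hs ⟨w.1, hL0.trans_lt w.2⟩⟩
      ⟨rfl, by
        funext w
        exact (hball (heball w.1 w.2)).1⟩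
    intro w hw
    exact DFunLike.congr_fun h12 ⟨w, hw⟩
  -- extend
  set S : ℂ → ℂ := fun w => if h : 0 < w.re then s ⟨w, h⟩ else 0 with hSdef
  have hSs : ∀ w (h : 0 < w.re), S w = s ⟨w, h⟩ := fun w h => by simp [hSdef, h]
  have hSG : ∀ w : ℂ, 0 < w.re → G.eval (S w) = e w := by
    intro w h
    rw [hSs w h]
    exact congrFun hs ⟨w, h⟩
  have hopen : IsOpen {w : ℂ | 0 < w.re} := isOpen_lt continuous_const Complex.continuous_re
  have hScont : ContinuousOn S {w : ℂ | 0 < w.re} := by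
    rw [continuousOn_iff_continuous_domRestrict]
    have : Set.domRestrict {w : ℂ | 0 < w.re} S = s := by
      funext w
      exact hSs w.1 w.2
    rw [this]
    exact s.continuous
  have hSdiff : ∀ w : ℂ, 0 < w.re → DifferentiableAt ℂ S w := by
    intro w hw
    have hne : G.derivative.eval (S w) ≠ 0 := by
      intro h
      exact hav 0 le_rfl w hw _ h (hSG w hw)
    have hsd' : HasStrictDerivAt (fun x => G.eval x) (G.derivative.eval (S w)) (S w) :=
      G.hasStrictDerivAt _
    have hsf' := hsd'.hasStrictFDerivAt_equiv hne
    have hd' := (hsd'.to_localInverse hne).hasDerivAt.differentiableAt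
    have hSc : ContinuousAt S w := hScont.continuousAt (hopen.mem_nhds hw)
    have hev := hSc.eventually hsf'.eventually_left_inverse
    have heq : S =ᶠ[𝓝 w] fun w' => hsd'.localInverse (fun x => G.eval x) _ (S w) hne (e w') := by
      filter_upwards [hev, hopen.mem_nhds hw] with w' h1 h2
      rw [← hSG w' h2]
      exact h1.symm
    refine DifferentiableAt.congr_of_eventuallyEq ?_ heq
    have hcomp : DifferentiableAt ℂ e w := by fun_prop
    simp only [hSG w hw] at hd'
    exact DifferentiableAt.comp w hd' hcomp
  have hSb : ∀ w : ℂ, 0 < w.re → ‖S w - z‖ ≤ M := by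
    intro w hw
    apply hb
    rw [hSG w hw, hen]
    have : Real.exp (-w.re) < 1 := by rw [Real.exp_lt_one_iff]; linarith
    nlinarith
  -- Phragmen-Lindelof
  set F : ℂ → ℂ := fun w => (S (w + 1) - z) * Complex.exp (w + 1) / r with hF
  have hFn : ∀ w : ℂ, 0 ≤ w.re → ‖F w‖ ≤ M * Real.exp 1 / r * Real.exp w.re := by
    intro w hw
    have h1 := hSb (w + 1) (by simp; linarith)
    simp only [hF, norm_div, norm_mul, Complex.norm_exp, Complex.norm_real, Real.norm_eq_abs,
      abs_of_pos hr, Complex.add_re, Complex.one_re]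
    rw [Real.exp_add]
    calc ‖S (w + 1) - z‖ * (Real.exp w.re * Real.exp 1) / r
        ≤ M * (Real.exp w.re * Real.exp 1) / r := by gcongr
      _ = _ := by ring
  have hFlim : Tendsto (fun x : ℝ => F x) atTop (𝓝 (G.derivative.eval z)⁻¹) := by
    have h1 : Tendsto (fun x : ℝ => e ((x : ℂ) + 1)) atTop (𝓝[≠] z) := by
      rw [tendsto_nhdsWithin_iff]
      constructor
      · rw [tendsto_iff_norm_sub_tendsto_zero]
        simp only [hen]
        have h2 : Tendsto (fun x : ℝ => r * Real.exp (-(x+1))) atTop (𝓝 (r * 0)) :=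
          ((Real.tendsto_exp_neg_atTop_nhds_zero).comp
            (tendsto_atTop_add_const_right _ 1 tendsto_id)).const_mul r
        simpa using h2
      · refine Eventually.of_forall fun x h => ?_
        have h2 := hen ((x : ℂ) + 1)
        simp only [Set.mem_singleton_iff] at h
        rw [h, sub_self, norm_zero] at h2
        have := mul_pos hr (Real.exp_pos (-((x : ℂ) + 1).re))
        linarith
    have h2 := (hasDerivAt_iff_tendsto_slope.1 hφd.hasDerivAt).comp h1
    refine h2.congr' ?_
    filter_upwards [eventually_ge_atTop L] with x hx
    have hxL : L < ((x : ℂ) + 1).re := by simp; linarith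
    have h3 := hsφ _ hxL
    have h4 : S ((x : ℂ) + 1) = φ (e ((x : ℂ) + 1)) := by
      rw [hSs _ (hL0.trans_lt hxL), h3]
    simp only [Function.comp_apply, hF, h4, slope_def_field, hφz]
    have h5 : e ((x : ℂ) + 1) - z = r * (Complex.exp ((x : ℂ) + 1))⁻¹ := by
      simp only [hedef, Complex.exp_neg]; ring
    rw [h5]
    have := Complex.exp_ne_zero ((x : ℂ) + 1)
    have hrc : (r : ℂ) ≠ 0 := by exact_mod_cast hr.ne'
    field_simp
  have hFb : ∀ w : ℂ, 0 ≤ w.re → ‖F w‖ ≤ M * Real.exp 1 / r := by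
    intro w hw
    refine PhragmenLindelof.right_half_plane_of_bounded_on_real (f := F) ?_ ?_ ?_ ?_ hw
    · refine DifferentiableOn.diffContOnCl ?_
      intro w hw
      have hw' : 0 ≤ w.re := by
        have hsub : {w : ℂ | 0 < w.re} ⊆ {w : ℂ | 0 ≤ w.re} := fun y hy => Set.mem_ofPred_eq ▸ le_of_lt (show (0:ℝ) < y.re from hy)
        have : w ∈ {w : ℂ | 0 ≤ w.re} := closure_minimal hsub
          (isClosed_le continuous_const Complex.continuous_re) hw
        exact this
      have h1 : DifferentiableAt ℂ S (w + 1) := hSdiff _ (by simp; linarith)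
      have h2 : DifferentiableAt ℂ (fun w => S (w + 1)) w :=
        DifferentiableAt.comp (f := fun w : ℂ => w + 1) w h1 (by fun_prop)
      refine DifferentiableAt.differentiableWithinAt ?_
      simp only [hF]
      fun_prop
    · refine ⟨1, by norm_num, 1, ?_⟩
      refine Asymptotics.IsBigO.of_bound (M * Real.exp 1 / r) ?_
      refine eventually_inf_principal.2 (Eventually.of_forall fun w hw => ?_)
      refine (hFn w (le_of_lt hw)).trans ?_
      rw [Real.norm_eq_abs, abs_of_pos (Real.exp_pos _)]
      gcongr
      simpa using Complex.re_le_norm w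
    · exact hFlim.norm.isBoundedUnder_le
    · intro x
      have := hFn (x * Complex.I) (by simp)
      simpa using this
  have := le_of_tendsto hFlim.norm ((eventually_ge_atTop 0).mono fun x hx => hFb x (by simpa using hx))
  rwa [norm_inv] at this

/-- iterate of a polynomial -/
noncomputable def itp {A : Type*} [CommRing A] (p : Polynomial A) (n : ℕ) : Polynomial A :=
  p.comp^[n] Polynomial.X

theorem itp_zero {A : Type*} [CommRing A] (p : Polynomial A) : itp p 0 = Polynomial.X := rfl

theorem itp_succ {A : Type*} [CommRing A] (p : Polynomial A) (n : ℕ) :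
    itp p (n+1) = p.comp (itp p n) := by
  simp [itp, Function.iterate_succ_apply']

theorem itp_eval {A : Type*} [CommRing A] (p : Polynomial A) (n : ℕ) (x : A) :
    (itp p n).eval x = (fun x => p.eval x)^[n] x := by
  simp [itp, Polynomial.iterate_comp_eval]

theorem itp_map {A B : Type*} [CommRing A] [CommRing B] (p : Polynomial A) (n : ℕ) (φ : A →+* B) :
    (itp p n).map φ = itp (p.map φ) n := by
  induction n with
  | zero => simp [itp_zero]
  | succ n ih => rw [itp_succ, itp_succ, Polynomial.map_comp, ih]

theorem itp_deriv {A : Type*} [CommRing A] (p : Polynomial A) (n : ℕ) (x : A) :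
    (itp p n).derivative.eval x =
      ∏ j ∈ Finset.range n, p.derivative.eval ((fun x => p.eval x)^[j] x) := by
  induction n with
  | zero => simp [itp_zero]
  | succ n ih =>
    rw [itp_succ, Polynomial.derivative_comp, Polynomial.eval_mul, ih, Finset.prod_range_succ,
      Polynomial.eval_comp, itp_eval, mul_comm]
    try ring

theorem itp_natDegree {A : Type*} [CommRing A] [IsDomain A] (p : Polynomial A) (n : ℕ) :
    (itp p n).natDegree = p.natDegree ^ n := by
  simp [itp, Polynomial.natDegree_iterate_comp]

theorem itp_fun (p : Polynomial ℂ) (n : ℕ) :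
    (fun x => (itp p n).eval x) = (fun x => p.eval x)^[n] := by
  funext x; exact itp_eval p n x

theorem itp_hasDerivAt (p : Polynomial ℂ) (n : ℕ) (x : ℂ) :
    HasDerivAt ((fun x => p.eval x)^[n]) ((itp p n).derivative.eval x) x := by
  rw [← itp_fun]; exact (itp p n).hasDerivAt x

theorem fatou (p : Polynomial ℂ) (R : ℝ)
    (hR : ∀ z : ℂ, R < ‖z‖ → 2 * ‖z‖ ≤ ‖p.eval z‖) (n : ℕ) (hn : 1 ≤ n) (z : ℂ)
    (hz : (fun x => p.eval x)^[n] z = z)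
    (hρ0 : (itp p n).derivative.eval z ≠ 0) (hρ1 : ‖(itp p n).derivative.eval z‖ < 1) :
    ∃ c, p.derivative.eval c = 0 ∧
      Tendsto (fun m : ℕ => (fun x => p.eval x)^[(m+1)*n] c - (fun x => p.eval x)^[m*n] c)
        atTop (𝓝 0) ∧
      ∀ m : ℕ, (fun x => p.eval x)^[(m+1)*n] c ≠ (fun x => p.eval x)^[m*n] c := by
  set f : ℂ → ℂ := fun x => p.eval x with hf
  set ρ := (itp p n).derivative.eval z with hρ
  have hfc : Continuous f := by simp only [hf]; fun_prop
  have hgd : HasDerivAt (f^[n]) ρ z := itp_hasDerivAt p n z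
  set q : ℝ := (‖ρ‖ + 1) / 2 with hq
  have hq1 : q < 1 := by rw [hq]; linarith
  have hq0 : 0 ≤ q := by have := norm_nonneg ρ; rw [hq]; linarith
  have hqρ : 0 < q - ‖ρ‖ := by rw [hq]; linarith
  have hev1 : ∀ᶠ w in 𝓝 z, ‖f^[n] w - z‖ ≤ q * ‖w - z‖ := by
    have := (hasDerivAt_iff_isLittleO.1 hgd).bound hqρ
    filter_upwards [this] with w hw
    rw [hz] at hw
    have h1 : f^[n] w - z = (f^[n] w - z - (w - z) • ρ) + (w - z) • ρ := by ring
    calc ‖f^[n] w - z‖ ≤ ‖f^[n] w - z - (w - z) • ρ‖ + ‖(w - z) • ρ‖ := by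
          conv_lhs => rw [h1]
          exact norm_add_le _ _
      _ ≤ (q - ‖ρ‖) * ‖w - z‖ + ‖w - z‖ * ‖ρ‖ := by
          rw [norm_smul]; gcongr
      _ = q * ‖w - z‖ := by ring
  have hev2 : ∀ᶠ w in 𝓝 z, w ≠ z → f^[n] w ≠ z := by
    have := hgd.eventually_ne (c := z) hρ0
    exact eventually_nhdsWithin_iff.1 this
  obtain ⟨r, hr, hball⟩ := Metric.eventually_nhds_iff.1 (hev1.and hev2)
  by_cases hex : ∃ c j, p.derivative.eval c = 0 ∧ ‖f^[j] c - z‖ < r ∧ f^[j] c ≠ z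
  · obtain ⟨c, j, hc, hcr, hcz⟩ := hex
    set y := f^[j] c with hy
    have horb : ∀ m : ℕ, ‖(f^[n])^[m] y - z‖ ≤ q ^ m * ‖y - z‖ ∧ (f^[n])^[m] y ≠ z ∧
        ‖(f^[n])^[m] y - z‖ < r := by
      intro m
      induction m with
      | zero => simpa using ⟨hcz, hcr⟩
      | succ m ih =>
        obtain ⟨h1, h2, h3⟩ := ih
        rw [Function.iterate_succ_apply']
        obtain ⟨h4, h5⟩ := hball (by rw [dist_eq_norm]; exact h3)
        refine ⟨?_, h5 h2, ?_⟩
        · refine h4.trans ?_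
          rw [pow_succ, mul_comm (q^m), mul_assoc]
          gcongr
        · refine h4.trans_lt ?_
          have := norm_nonneg ((f^[n])^[m] y - z)
          nlinarith
    have hjn : j ≤ j * n := Nat.le_mul_of_pos_right j hn
    have hid : ∀ m, f^[(m+j)*n] c = f^[j*n-j] ((f^[n])^[m] y) := by
      intro m
      rw [hy, ← Function.iterate_mul, ← Function.iterate_add_apply, ← Function.iterate_add_apply]
      congr 1
      rw [add_mul]
      have : n * m = m * n := mul_comm _ _
      omega
    have hlim : Tendsto (fun m => (f^[n])^[m] y) atTop (𝓝 z) := by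
      rw [tendsto_iff_norm_sub_tendsto_zero]
      refine squeeze_zero (fun _ => norm_nonneg _) (fun m => (horb m).1) ?_
      have := (tendsto_pow_atTop_nhds_zero_of_lt_one hq0 hq1).mul_const ‖y - z‖
      simpa using this
    have hlim2 : Tendsto (fun m => f^[m*n] c) atTop (𝓝 (f^[j*n-j] z)) := by
      rw [← tendsto_add_atTop_iff_nat j]
      simp only [hid]
      exact ((hfc.iterate _).tendsto z).comp hlim
    refine ⟨c, hc, ?_, ?_⟩
    · have := ((tendsto_add_atTop_iff_nat 1).2 hlim2).sub hlim2
      simpa using this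
    · intro m heq
      obtain ⟨h1, h2, h3⟩ := horb m
      have h4 := (hball (y := (f^[n])^[m] y) (by rw [dist_eq_norm]; exact h3)).1
      have h5 : f^[n] ((f^[n])^[m] y) = (f^[n])^[m] y := by
        have e1 : (f^[n])^[m] y = f^[j] (f^[m*n] c) := by
          rw [hy, ← Function.iterate_mul, ← Function.iterate_add_apply,
            ← Function.iterate_add_apply]
          congr 1
          have : n * m = m * n := mul_comm _ _
          omega
        have e2 : f^[n] (f^[j] (f^[m*n] c)) = f^[j] (f^[(m+1)*n] c) := by
          rw [← Function.iterate_add_apply, ← Function.iterate_add_apply,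
            ← Function.iterate_add_apply]
          congr 1
          ring
        rw [e1, e2, heq]
      rw [h5] at h4
      have h6 : 0 < ‖(f^[n])^[m] y - z‖ := norm_pos_iff.2 (sub_ne_zero.2 h2)
      nlinarith
  · exfalso
    push Not at hex
    set R' := max R (‖z‖ + r) with hR'
    have hesc : ∀ x : ℂ, R' < ‖x‖ → ∀ k : ℕ, ‖x‖ ≤ ‖f^[k] x‖ := by
      intro x hx k
      induction k with
      | zero => simp
      | succ k ih =>
        rw [Function.iterate_succ_apply']
        have h1 := hR (f^[k] x) (((le_max_left _ _).trans_lt hx).trans_le ih)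
        have h2 := norm_nonneg (f^[k] x)
        have h3 : ‖f (f^[k] x)‖ = ‖p.eval (f^[k] x)‖ := rfl
        linarith
    have hR'0 : 0 ≤ R' := (by positivity : 0 ≤ ‖z‖ + r).trans (le_max_right _ _)
    have hbd : ∀ k : ℕ, ‖ρ ^ k‖⁻¹ ≤ (R' + ‖z‖) * Real.exp 1 / r := by
      intro k
      have hGz : (itp p (n*k)).eval z = z := by
        rw [itp_eval, Function.iterate_mul]
        exact Function.iterate_fixed hz k
      have hGd : (itp p (n*k)).derivative.eval z = ρ ^ k := by
        have h1 := itp_hasDerivAt p (n*k) z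
        have h2 := HasDerivAt.iterate z hgd hz k
        rw [← Function.iterate_mul] at h2
        exact h1.unique h2
      rw [← hGd]
      refine branch_bound (itp p (n*k)) z r (R' + ‖z‖) hr (by positivity) hGz ?_ ?_ ?_
      · rw [hGd]; exact pow_ne_zero _ hρ0
      · intro x hx
        rw [itp_deriv, Finset.prod_eq_zero_iff] at hx
        obtain ⟨j, hj, hjx⟩ := hx
        rw [Finset.mem_range] at hj
        have h1 := hex (f^[j] x) (n*k-j) hjx
        rw [← Function.iterate_add_apply, Nat.sub_add_cancel hj.le] at h1
        rw [itp_eval]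
        by_contra hcon
        push Not at hcon
        exact hcon.1 (h1 hcon.2)
      · intro x hx
        rw [itp_eval] at hx
        have h1 : ‖x‖ ≤ R' := by
          by_contra hcon
          push Not at hcon
          have h2 := hesc x hcon (n*k)
          have h3 : ‖f^[n*k] x‖ ≤ ‖f^[n*k] x - z‖ + ‖z‖ := by
            have := norm_add_le (f^[n*k] x - z) z
            rwa [sub_add_cancel] at this
          have h4 := le_max_right R (‖z‖ + r)
          have h5 : ‖f^[n*k] x - z‖ < r := hx
          linarith
        exact (norm_sub_le _ _).trans (by gcongr)
    have hρpos : 0 < ‖ρ‖ := norm_pos_iff.2 hρ0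
    have h1 : 1 < ‖ρ‖⁻¹ := (one_lt_inv₀ hρpos).2 hρ1
    obtain ⟨k, hk⟩ := pow_unbounded_of_one_lt ((R' + ‖z‖) * Real.exp 1 / r) h1
    have := hbd k
    rw [norm_pow, ← inv_pow] at this
    linarith

theorem vitali_zero {D : Set ℂ} (hD : IsOpen D) (hDc : IsPreconnected D) {F : ℕ → ℂ → ℂ}
    (hF : ∀ k, DifferentiableOn ℂ (F k) D) {M : ℝ} (hM : ∀ k, ∀ t ∈ D, ‖F k t‖ ≤ M)
    {t₁ : ℂ} (ht₁ : t₁ ∈ D)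
    (hfr : ∃ᶠ t in 𝓝[≠] t₁, Tendsto (fun k => F k t) atTop (𝓝 0)) :
    ∀ t ∈ D, Tendsto (fun k => F k t) atTop (𝓝 0) := by
  intro t ht
  rw [tendsto_iff_ultrafilter]
  intro u hu
  have hlim : ∀ s : ℂ, ∃ y, s ∈ D → Tendsto (fun k => F k s) u (𝓝 y) := by
    intro s
    by_cases hs : s ∈ D
    · have hc : IsCompact (Metric.closedBall (0:ℂ) M) := isCompact_closedBall _ _
      obtain ⟨y, -, hy⟩ := hc.ultrafilter_le_nhds (u.map (fun k => F k s)) (by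
        rw [le_principal_iff]
        refine Filter.mem_map.2 (Filter.univ_mem' ?_)
        intro k
        simpa using hM k s hs)
      exact ⟨y, fun _ => hy⟩
    · exact ⟨0, fun h => absurd h hs⟩
  choose φ hφ using hlim
  have hM0 : 0 ≤ M := (norm_nonneg _).trans (hM 0 t ht)
  have hunif : TendstoLocallyUniformlyOn F φ (u : Filter ℕ) D := by
    rw [Metric.tendstoLocallyUniformlyOn_iff]
    intro ε hε x hx
    obtain ⟨r, hr, hrD⟩ := Metric.isOpen_iff.1 hD x hx
    have hlip : ∀ k, ∀ y ∈ Metric.ball x (r/2), ‖F k y - F k x‖ ≤ (M / (r/2) ) * ‖y - x‖ := by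
      intro k y hy
      refine (convex_ball x (r/2)).norm_image_sub_le_of_norm_deriv_le (f := F k) ?_ ?_ (Metric.mem_ball_self (by positivity)) hy
      · intro z hz
        exact (hF k).differentiableAt (hD.mem_nhds (hrD (Metric.ball_subset_ball (by linarith) hz)))
      · intro z hz
        have hsub : Metric.ball z (r/2) ⊆ D := by
          intro w hw
          apply hrD
          rw [Metric.mem_ball] at *
          linarith [dist_triangle w z x]
        apply le_of_forall_gt_imp_ge_of_dense
        intro b hb
        -- use slightly smaller radius
        obtain ⟨ρ, hρ0, hρr, hρb⟩ : ∃ ρ, 0 < ρ ∧ ρ < r/2 ∧ M / ρ ≤ b := by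
          have hb0 : 0 < b := lt_of_le_of_lt (by positivity) hb
          rw [div_lt_iff₀ (by positivity)] at hb
          have h1 : M / b < r / 2 := by rw [div_lt_iff₀ hb0]; linarith
          obtain ⟨ρ, h2, h3⟩ := exists_between h1
          refine ⟨ρ, lt_of_le_of_lt (by positivity) h2, h3, ?_⟩
          have : 0 < ρ := lt_of_le_of_lt (by positivity) h2
          rw [div_lt_iff₀ hb0] at h2
          rw [div_le_iff₀ this]; linarith
        refine le_trans (Complex.norm_deriv_le_of_forall_mem_sphere_norm_le hρ0 ?_ ?_) hρb
        · refine ⟨(hF k).mono ((Metric.ball_subset_ball hρr.le).trans hsub), ?_⟩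
          refine (hF k).continuousOn.mono ?_
          exact Metric.closure_ball_subset_closedBall.trans ((Metric.closedBall_subset_ball hρr).trans hsub)
        · intro w hw
          exact hM k w (hsub (Metric.mem_ball.2 (by rw [Metric.mem_sphere] at hw; linarith)))
    set L := M / (r/2) with hL
    have hL0 : 0 ≤ L := by positivity
    have hxD : ∀ y ∈ Metric.ball x (r/2), y ∈ D := fun y hy =>
      hrD (Metric.ball_subset_ball (by linarith) hy)
    have hlipφ : ∀ y ∈ Metric.ball x (r/2), ‖φ y - φ x‖ ≤ L * ‖y - x‖ := by
      intro y hy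
      refine le_of_tendsto (((hφ y (hxD y hy)).sub (hφ x hx)).norm) ?_
      exact Eventually.of_forall fun k => hlip k y hy
    set δ := min (r/2) (ε / (3 * (L + 1))) with hδ
    have hδ0 : 0 < δ := by positivity
    refine ⟨Metric.ball x δ, mem_nhdsWithin_of_mem_nhds (Metric.ball_mem_nhds _ hδ0), ?_⟩
    have := Metric.tendsto_nhds.1 (hφ x hx) (ε/3) (by positivity)
    filter_upwards [this] with k hk y hy
    have hy' : y ∈ Metric.ball x (r/2) := Metric.ball_subset_ball (min_le_left _ _) hy
    have hyn : ‖y - x‖ < ε / (3 * (L + 1)) := by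
      rw [Metric.mem_ball, dist_eq_norm] at hy
      exact hy.trans_le (min_le_right _ _)
    have hle : L * ‖y - x‖ ≤ ε / 3 := by
      calc L * ‖y - x‖ ≤ (L+1) * (ε / (3 * (L + 1))) := by gcongr; linarith
        _ = ε / 3 := by field_simp
    have h1 := hlip k y hy'
    have h2 := hlipφ y hy'
    rw [dist_eq_norm] at hk ⊢
    have : φ y - F k y = (φ y - φ x) - (F k x - φ x) - (F k y - F k x) := by ring
    rw [this]
    refine (norm_sub_le _ _).trans_lt ?_
    have := norm_sub_le (φ y - φ x) (F k x - φ x)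
    linarith
  have hdiff : DifferentiableOn ℂ φ D :=
    hunif.differentiableOn (Eventually.of_forall hF) hD
  have hz : Set.EqOn φ 0 D := by
    refine (hdiff.analyticOnNhd hD).eqOn_zero_of_preconnected_of_frequently_eq_zero hDc ht₁ ?_
    have hev : ∀ᶠ s in 𝓝[≠] t₁, s ∈ D := nhdsWithin_le_nhds (hD.mem_nhds ht₁)
    refine (hfr.and_eventually hev).mono ?_
    rintro s ⟨h1, h2⟩
    exact tendsto_nhds_unique (hφ s h2) (h1.mono_left hu)
  have := hφ t ht
  rwa [hz ht] at this

/-- Repelling fixed points: convergence implies landing. -/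
theorem repelling_landing {g : ℂ → ℂ} (hg : Differentiable ℂ g)
    (hrep : ∀ z, g z = z → 1 < ‖deriv g z‖) {y : ℕ → ℂ} (hy : ∀ k, y (k+1) = g (y k))
    {R : ℝ} (hb : ∀ k, ‖y k‖ ≤ R) (hlim : Tendsto (fun k => y (k+1) - y k) atTop (𝓝 0)) :
    ∃ K, y (K+1) = y K := by
  have hc : IsCompact (Metric.closedBall (0:ℂ) R) := isCompact_closedBall _ _
  obtain ⟨z, -, ψ, hψ, hz⟩ := hc.tendsto_subseq (x := y) (fun k => by simpa using hb k)
  have hfix : g z = z := by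
    have h1 : Tendsto (fun k => g (y (ψ k)) - y (ψ k)) atTop (𝓝 (g z - z)) :=
      ((hg.continuous.tendsto z).comp hz).sub hz
    have h2 : Tendsto (fun k => g (y (ψ k)) - y (ψ k)) atTop (𝓝 0) := by
      simpa [Function.comp_def, hy] using hlim.comp hψ.tendsto_atTop
    exact sub_eq_zero.1 (tendsto_nhds_unique h1 h2)
  obtain ⟨q, hq1, hq2⟩ := exists_between (hrep z hfix)
  -- expansion near z
  have hexp : ∀ᶠ w in 𝓝 z, q * ‖w - z‖ ≤ ‖g w - z‖ := by
    have hd := (hg z).hasDerivAt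
    have := (hasDerivAt_iff_isLittleO.1 hd).def (sub_pos.2 hq2)
    filter_upwards [this] with w hw
    rw [hfix] at hw
    have h3 : (w - z) • deriv g z = (g w - z) - (g w - z - (w - z) • deriv g z) := by ring
    have h4 : ‖(w - z) • deriv g z‖ ≤ ‖g w - z‖ + ‖g w - z - (w - z) • deriv g z‖ := by
      conv_lhs => rw [h3]
      exact norm_sub_le _ _
    rw [norm_smul] at h4
    nlinarith
  obtain ⟨ε, hε, hball⟩ := Metric.eventually_nhds_iff.1 hexp
  have hQ : ∀ w, ‖w - z‖ < ε → (q - 1) * ‖w - z‖ ≤ ‖g w - w‖ := by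
    intro w hw
    have h1 := hball (y := w) (by rwa [dist_eq_norm])
    have h2 : ‖g w - z‖ ≤ ‖g w - w‖ + ‖w - z‖ := by
      simpa using norm_add_le (g w - w) (w - z)
    linarith
  have hev : ∀ᶠ k in atTop, ‖y (k+1) - y k‖ < min (ε/2) ((q-1) * (ε/2)) := by
    have h0 : 0 < min (ε/2) ((q-1) * (ε/2)) := by
      have : 0 < q - 1 := by linarith
      positivity
    have := Metric.tendsto_nhds.1 hlim _ h0
    simpa using this
  obtain ⟨K0, hK0⟩ := eventually_atTop.1 hev
  have hclose : ∀ᶠ k in atTop, ‖y (ψ k) - z‖ < ε := by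
    have := Metric.tendsto_nhds.1 hz ε hε
    simpa [dist_eq_norm] using this
  obtain ⟨m, hm1, hm2⟩ := (hclose.and (hψ.tendsto_atTop.eventually_ge_atTop K0)).exists
  set K := ψ m
  have hstay : ∀ j, ‖y (K + j) - z‖ < ε := by
    intro j
    induction j with
    | zero => simpa using hm1
    | succ j ih =>
      have h1 := hQ _ ih
      rw [← hy] at h1
      have h2 := hK0 (K + j) (by omega)
      have h3 := lt_min_iff.1 h2
      have h4 : ‖y (K+j) - z‖ < ε/2 := by
        have : 0 < q - 1 := by linarith
        nlinarith
      have h5 : ‖y (K + j + 1) - z‖ ≤ ‖y (K+j+1) - y (K+j)‖ + ‖y (K+j) - z‖ := by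
        simpa using norm_add_le (y (K+j+1) - y (K+j)) (y (K+j) - z)
      rw [← add_assoc]
      linarith [h3.1]
  have hgrow : ∀ j, q ^ j * ‖y K - z‖ ≤ ‖y (K + j) - z‖ := by
    intro j
    induction j with
    | zero => simp
    | succ j ih =>
      have h1 := hball (y := y (K+j)) (by rw [dist_eq_norm]; exact hstay j)
      rw [← hy] at h1
      rw [← add_assoc, pow_succ]
      nlinarith
  have hzero : ‖y K - z‖ = 0 := by
    by_contra hne
    have hpos : 0 < ‖y K - z‖ := lt_of_le_of_ne (norm_nonneg _) (Ne.symm hne)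
    obtain ⟨j, hj⟩ := pow_unbounded_of_one_lt (ε / ‖y K - z‖) hq1
    rw [div_lt_iff₀ hpos] at hj
    linarith [hgrow j, hstay j]
  refine ⟨K, ?_⟩
  have : y K = z := sub_eq_zero.1 (norm_eq_zero.1 hzero)
  rw [hy, this, hfix]

theorem hurwitz_neutral {D : Set ℂ} (hD : IsOpen D) (hDc : IsPreconnected D) {E : ℂ → ℂ → ℂ}
    (hE : Continuous (fun p : ℂ × ℂ => E p.1 p.2)) (hEd : ∀ l, Differentiable ℂ (E l))
    (hne : ∀ l, ‖l‖ < 1 → ∀ t ∈ D, E l t ≠ 0) {l₀ t₀ : ℂ} (hl₀ : ‖l₀‖ ≤ 1) (ht₀ : t₀ ∈ D)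
    (h0 : E l₀ t₀ = 0) : ∀ t ∈ D, E l₀ t = 0 := by
  by_contra hcon
  push Not at hcon
  obtain ⟨t', ht', hE'⟩ := hcon
  have hiso : ∀ᶠ t in 𝓝[≠] t₀, E l₀ t ≠ 0 := by
    by_contra h
    have h' : ∃ᶠ t in 𝓝[≠] t₀, E l₀ t = 0 := h
    exact hE' (((hEd l₀).differentiableOn.analyticOnNhd hD).eqOn_zero_of_preconnected_of_frequently_eq_zero
      hDc ht₀ h' ht')
  have h1 := eventually_nhdsWithin_iff.1 hiso
  obtain ⟨r, hr, hball⟩ := Metric.eventually_nhds_iff.1 (h1.and (hD.mem_nhds ht₀))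
  set S := Metric.sphere t₀ (r/2)
  have hS : IsCompact S := isCompact_sphere _ _
  have hSne : S.Nonempty := NormedSpace.sphere_nonempty.mpr (by positivity)
  have hS0 : ∀ t ∈ S, E l₀ t ≠ 0 := by
    intro t ht
    rw [Metric.mem_sphere] at ht
    refine (hball (by linarith)).1 ?_
    intro h; simp at h; subst h; simp at ht; linarith
  obtain ⟨s, hs, hmin⟩ := hS.exists_isMinOn hSne (f := fun t => ‖E l₀ t‖)
    ((hEd l₀).continuous.norm.continuousOn)
  set δ := ‖E l₀ s‖
  have hδ : 0 < δ := norm_pos_iff.2 (hS0 s hs)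
  -- uniform closeness on sphere
  have hev1 : ∀ᶠ l in 𝓝 l₀, ∀ t ∈ S, δ/2 < ‖E l t‖ := by
    refine hS.eventually_forall_of_forall_eventually ?_
    intro t ht
    have : ContinuousAt (fun p : ℂ × ℂ => ‖E p.1 p.2‖) (l₀, t) := hE.norm.continuousAt
    have hlt : δ / 2 < ‖E l₀ t‖ := lt_of_lt_of_le (by linarith) (hmin ht)
    exact this.eventually (lt_mem_nhds hlt)
  have hev2 : ∀ᶠ l in 𝓝 l₀, ‖E l t₀‖ < δ/2 := by
    have : ContinuousAt (fun l => ‖E l t₀‖) l₀ :=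
      (hE.comp (by fun_prop : Continuous (fun l : ℂ => (l, t₀)))).norm.continuousAt
    refine this.eventually (gt_mem_nhds ?_)
    simp only [h0, norm_zero]; positivity
  have hfr : ∃ l, ‖l‖ < 1 ∧ (∀ t ∈ S, δ/2 < ‖E l t‖) ∧ ‖E l t₀‖ < δ/2 := by
    have hcl : l₀ ∈ closure (Metric.ball (0:ℂ) 1) := by
      rw [closure_ball _ one_ne_zero]; simpa using hl₀
    obtain ⟨l, hl, hl'⟩ := (mem_closure_iff_frequently.1 hcl).and_eventually (hev1.and hev2) |>.exists
    exact ⟨l, by simpa using hl, hl'.1, hl'.2⟩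
  obtain ⟨l, hl, hlS, hlt⟩ := hfr
  have hsub : Metric.closedBall t₀ (r/2) ⊆ D := fun t ht => (hball (by
    rw [Metric.mem_closedBall] at ht; linarith)).2
  have hdc : DiffContOnCl ℂ (fun t => (E l t)⁻¹) (Metric.ball t₀ (r/2)) := by
    refine DifferentiableOn.diffContOnCl ?_
    rw [closure_ball _ (by positivity)]
    exact (hEd l).differentiableOn.inv (fun t ht => hne l hl t (hsub ht))
  have hmax := Complex.norm_le_of_forall_mem_frontier_norm_le (Metric.isBounded_ball) hdc (C := (δ/2)⁻¹)
    (by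
      intro t ht
      rw [frontier_ball _ (by positivity)] at ht
      rw [norm_inv]
      exact inv_anti₀ (by positivity) (hlS t ht).le)
    (subset_closure (Metric.mem_ball_self (x := t₀) (by positivity)))
  rw [norm_inv] at hmax
  have hpos : 0 < ‖E l t₀‖ := norm_pos_iff.2 (hne l hl t₀ ht₀)
  have := (inv_le_inv₀ hpos (by positivity)).1 hmax
  linarith

/-- specialization of a one-parameter family -/
noncomputable def Pt (Q : Polynomial (Polynomial ℂ)) (t : ℂ) : Polynomial ℂ :=
  Q.map (Polynomial.evalRingHom t)

theorem Pt_eval_cont (Q : Polynomial (Polynomial ℂ)) :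
    Continuous (fun p : ℂ × ℂ => (Pt Q p.1).eval p.2) := by
  simp only [Pt, Polynomial.eval_map, Polynomial.eval₂_eq_sum_range, Polynomial.coe_evalRingHom]
  fun_prop

theorem Pt_eval_poly (Q : Polynomial (Polynomial ℂ)) (q : Polynomial ℂ) (t : ℂ) :
    (Q.eval q).eval t = (Pt Q t).eval (q.eval t) := by
  have := Polynomial.eval₂_at_apply (p := Q) (Polynomial.evalRingHom t) q
  rw [Pt, Polynomial.eval_map]
  simpa using this.symm

theorem Pt_itp (Q : Polynomial (Polynomial ℂ)) (n : ℕ) (t : ℂ) :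
    Pt (itp Q n) t = itp (Pt Q t) n := itp_map _ _ _

theorem Pt_deriv (Q : Polynomial (Polynomial ℂ)) (t : ℂ) :
    Pt Q.derivative t = (Pt Q t).derivative := by
  simp [Pt, Polynomial.derivative_map]

theorem Pt_sub (Q Q' : Polynomial (Polynomial ℂ)) (t : ℂ) :
    Pt (Q - Q') t = Pt Q t - Pt Q' t := by
  simp [Pt]

theorem Pt_X (t : ℂ) : Pt Polynomial.X t = Polynomial.X := by simp [Pt]

theorem root_near (p : Polynomial ℂ) (z₀ : ℂ) (ε : ℝ) (hε : 0 < ε)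
    (h : ‖p.eval z₀‖ < ‖p.leadingCoeff‖ * ε ^ p.natDegree) :
    ∃ z, p.eval z = 0 ∧ ‖z - z₀‖ < ε := by
  by_contra hcon
  push Not at hcon
  have hp : p ≠ 0 := by
    rintro rfl; simp at h
  have hs := IsAlgClosed.splits p
  have h1 := hs.eval_eq_prod_roots z₀
  have hcard := hs.natDegree_eq_card_roots
  have h2 : ∀ s : Multiset ℂ, (∀ z ∈ s, ε ≤ ‖z - z₀‖) →
      ε ^ s.card ≤ ‖(s.map fun a => z₀ - a).prod‖ := by
    intro s
    induction s using Multiset.induction with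
    | empty => simp
    | cons a s ih =>
      intro hs
      have h3 := ih fun z hz => hs z (Multiset.mem_cons_of_mem hz)
      have h4 := hs a (Multiset.mem_cons_self a s)
      rw [Multiset.card_cons, Multiset.map_cons, Multiset.prod_cons, norm_mul, pow_succ, mul_comm]
      rw [norm_sub_rev] at h4
      gcongr
  have h3 := h2 p.roots fun z hz => hcon z (Polynomial.isRoot_of_mem_roots hz)
  rw [h1, norm_mul, hcard] at h
  have := mul_le_mul_of_nonneg_left h3 (norm_nonneg p.leadingCoeff)
  linarith

theorem fixpoly_natDegree (p : Polynomial ℂ) (d n : ℕ) (hd : 2 ≤ d) (hn : 1 ≤ n)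
    (hdeg : p.natDegree = d) : (itp p n - Polynomial.X).natDegree = d ^ n := by
  have h1 : (itp p n).natDegree = d ^ n := by rw [itp_natDegree, hdeg]
  have h2 : 2 ≤ d ^ n := hd.trans (Nat.le_self_pow (by omega) d)
  rw [Polynomial.natDegree_sub_eq_left_of_natDegree_lt, h1]
  rw [Polynomial.natDegree_X]; omega

theorem fix_near (Q : Polynomial (Polynomial ℂ)) (d n : ℕ) (hd : 2 ≤ d) (hn : 1 ≤ n)
    (hdeg : ∀ t, (Pt Q t).natDegree = d) (t₁ z₁ : ℂ)
    (hz : (fun x => (Pt Q t₁).eval x)^[n] z₁ = z₁) (ε : ℝ) (hε : 0 < ε) :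
    ∀ᶠ t in 𝓝 t₁, ∃ z, (fun x => (Pt Q t).eval x)^[n] z = z ∧
      ‖(itp (Pt Q t) n).derivative.eval z - (itp (Pt Q t₁) n).derivative.eval z₁‖ < ε := by
  have hc : ContinuousAt (fun p : ℂ × ℂ => (itp (Pt Q p.1) n).derivative.eval p.2) (t₁, z₁) := by
    have := Pt_eval_cont (itp Q n).derivative
    simp only [Pt_deriv, Pt_itp] at this
    exact this.continuousAt
  obtain ⟨δ, hδ, hδ'⟩ := Metric.continuousAt_iff.1 hc ε hε
  set F := itp Q n - Polynomial.X with hF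
  have hFt : ∀ t, Pt F t = itp (Pt Q t) n - Polynomial.X := by
    intro t; rw [hF, Pt_sub, Pt_itp, Pt_X]
  have hFd : ∀ t, (Pt F t).natDegree = d ^ n := by
    intro t; rw [hFt, fixpoly_natDegree _ d n hd hn (hdeg t)]
  have hlc : ∀ t, (Pt F t).leadingCoeff = (F.coeff (d^n)).eval t := by
    intro t
    rw [Polynomial.leadingCoeff, hFd, Pt, Polynomial.coeff_map, Polynomial.coe_evalRingHom]
  have hlc0 : (Pt F t₁).leadingCoeff ≠ 0 := by
    intro h
    rw [Polynomial.leadingCoeff_eq_zero] at h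
    have h1 := hFd t₁
    rw [h, Polynomial.natDegree_zero] at h1
    have : 0 < d ^ n := by positivity
    omega
  have hev : ∀ᶠ t in 𝓝 t₁, ‖(Pt F t).eval z₁‖ < ‖(F.coeff (d^n)).eval t‖ * δ ^ (d^n) := by
    have c1 : Continuous fun t => ‖(Pt F t).eval z₁‖ :=
      ((Pt_eval_cont F).comp (by fun_prop : Continuous fun t : ℂ => (t, z₁))).norm
    have c2 : Continuous fun t => ‖(F.coeff (d^n)).eval t‖ * δ ^ (d^n) := by fun_prop
    refine c1.continuousAt.eventually_lt c2.continuousAt ?_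
    have e1 : (Pt F t₁).eval z₁ = 0 := by
      rw [hFt, Polynomial.eval_sub, itp_eval, hz]; simp
    rw [e1, norm_zero, ← hlc]
    have := norm_pos_iff.2 hlc0
    positivity
  filter_upwards [hev, Metric.ball_mem_nhds t₁ hδ] with t h1 h2
  obtain ⟨z, hz0, hzz⟩ := root_near (Pt F t) z₁ δ hδ (by rw [hlc, hFd]; exact h1)
  refine ⟨z, ?_, ?_⟩
  · rw [hFt, Polynomial.eval_sub, itp_eval, Polynomial.eval_X, sub_eq_zero] at hz0
    exact hz0
  · rw [← dist_eq_norm]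
    refine @hδ' (t, z) ?_
    rw [Prod.dist_eq, dist_eq_norm z]
    exact max_lt h2 hzz

theorem E_exists (Q : Polynomial (Polynomial ℂ)) (d n : ℕ) (hd : 2 ≤ d) (hn : 1 ≤ n)
    (hdeg : ∀ t, (Pt Q t).natDegree = d) :
    ∃ E : ℂ → ℂ → ℂ, Continuous (fun p : ℂ × ℂ => E p.1 p.2) ∧ (∀ l, Differentiable ℂ (E l)) ∧
      ∀ l t, E l t = 0 ↔ ∃ z, (fun x => (Pt Q t).eval x)^[n] z = z ∧
        (itp (Pt Q t) n).derivative.eval z = l := by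
  refine ⟨fun l t => Polynomial.resultant (Pt (itp Q n - Polynomial.X) t)
    (Pt (itp Q n).derivative t - Polynomial.C l) (d^n) (d^n), ?_, ?_, ?_⟩
  · unfold Polynomial.resultant
    refine Continuous.matrix_det ?_
    refine continuous_matrix fun i j => ?_
    unfold Polynomial.sylvester
    simp only [Matrix.of_apply]
    refine Fin.addCases (fun j => ?_) (fun j => ?_) j
    · simp only [Fin.addCases_left]
      split_ifs
      · simp only [Pt, Polynomial.coeff_sub, Polynomial.coeff_map, Polynomial.coe_evalRingHom,
          Polynomial.coeff_C]
        split_ifs <;> fun_prop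
      · fun_prop
    · simp only [Fin.addCases_right]
      split_ifs
      · simp only [Pt, Polynomial.coeff_map, Polynomial.coe_evalRingHom]
        fun_prop
      · fun_prop
  · intro l
    have : (fun t => Polynomial.resultant (Pt (itp Q n - Polynomial.X) t)
        (Pt (itp Q n).derivative t - Polynomial.C l) (d^n) (d^n)) =
        fun t => (Polynomial.resultant (itp Q n - Polynomial.X)
          ((itp Q n).derivative - Polynomial.C (Polynomial.C l)) (d^n) (d^n)).eval t := by
      funext t
      rw [← Polynomial.coe_evalRingHom, ← Polynomial.resultant_map_map]
      rw [Polynomial.map_sub (Polynomial.evalRingHom t) (p := (itp Q n).derivative), Polynomial.map_C]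
      rw [Polynomial.coe_evalRingHom, Polynomial.eval_C]
      rfl
    change Differentiable ℂ (fun t => Polynomial.resultant (Pt (itp Q n - Polynomial.X) t)
        (Pt (itp Q n).derivative t - Polynomial.C l) (d^n) (d^n))
    rw [this]
    exact Polynomial.differentiable _
  · intro l t
    have hdg := fixpoly_natDegree _ d n hd hn (hdeg t)
    change Polynomial.resultant (Pt (itp Q n - Polynomial.X) t)
        (Pt (itp Q n).derivative t - Polynomial.C l) (d^n) (d^n) = 0 ↔ _
    rw [Pt_sub, Pt_deriv, Pt_itp, Pt_X]
    set q := itp (Pt Q t) n with hq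
    have hqd : q.natDegree = d ^ n := by rw [hq, itp_natDegree, hdeg]
    have h0 : q - Polynomial.X ≠ 0 := by
      intro h
      rw [h, Polynomial.natDegree_zero] at hdg
      have : 0 < d ^ n := by positivity
      omega
    have h1 := Polynomial.resultant_eq_prod_eval (q - Polynomial.X)
      (q.derivative - Polynomial.C l) (d^n) (by
        refine (Polynomial.natDegree_sub_C).le.trans ?_
        refine (Polynomial.natDegree_derivative_le q).trans ?_
        omega) (IsAlgClosed.splits _)
    rw [hdg] at h1
    rw [h1, mul_eq_zero, Multiset.prod_eq_zero_iff]
    simp only [Multiset.mem_map]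
    constructor
    · rintro (h | ⟨z, hz, hz'⟩)
      · exact absurd h (pow_ne_zero _ (by simpa using h0))
      · rw [Polynomial.mem_roots h0, Polynomial.IsRoot, Polynomial.eval_sub, Polynomial.eval_X,
          sub_eq_zero, hq, itp_eval] at hz
        rw [Polynomial.eval_sub, Polynomial.eval_C, sub_eq_zero] at hz'
        exact ⟨z, hz, hz'⟩
    · rintro ⟨z, hz, hz'⟩
      refine Or.inr ⟨z, ?_, ?_⟩
      · rw [Polynomial.mem_roots h0, Polynomial.IsRoot, Polynomial.eval_sub, Polynomial.eval_X,
          sub_eq_zero, hq, itp_eval]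
        exact hz
      · rw [Polynomial.eval_sub, Polynomial.eval_C, sub_eq_zero]
        exact hz'

theorem poly_zero_of_frequently (q : Polynomial ℂ) (t₁ : ℂ)
    (h : ∃ᶠ t in 𝓝[≠] t₁, q.eval t = 0) (t : ℂ) : q.eval t = 0 := by
  have hA : AnalyticOnNhd ℂ (fun t => q.eval t) Set.univ :=
    (q.differentiable).differentiableOn.analyticOnNhd isOpen_univ
  exact hA.eqOn_zero_of_preconnected_of_frequently_eq_zero isPreconnected_univ
    (Set.mem_univ t₁) h (Set.mem_univ t)

theorem freq_pigeon {ι : Type*} [Finite ι] {l : Filter ℂ} [l.NeBot] {Φ : ι → ℂ → Prop}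
    (h : ∀ᶠ t in l, ∃ i, Φ i t) : ∃ i, ∃ᶠ t in l, Φ i t := by
  by_contra hcon
  push Not at hcon
  have := (Filter.eventually_all.2 hcon).and h
  obtain ⟨t, h1, i, h2⟩ := this.exists
  exact h1 i h2

theorem one_param (Q : Polynomial (Polynomial ℂ)) (d n : ℕ) (hd : 2 ≤ d) (hn : 1 ≤ n)
    (hdeg : ∀ t, (Pt Q t).natDegree = d) {ι : Type*} [Finite ι] (γ : ι → Polynomial ℂ)
    (hγ : ∀ t z, (Pt Q t).derivative.eval z = 0 → ∃ i, z = (γ i).eval t)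
    (hγ' : ∀ t i, (Pt Q t).derivative.eval ((γ i).eval t) = 0)
    (D : Set ℂ) (hD : IsOpen D) (hDc : IsPreconnected D) (R : ℝ)
    (hR : ∀ t ∈ D, ∀ z : ℂ, R < ‖z‖ → 2 * ‖z‖ ≤ ‖(Pt Q t).eval z‖)
    (hb : ∀ t ∈ D, ∀ i, ∀ k : ℕ, ‖(fun x => (Pt Q t).eval x)^[k] ((γ i).eval t)‖ ≤ R)
    (hcl : IsClosed {t : ℂ | ∃ z, (fun x => (Pt Q t).eval x)^[n] z = z ∧
      ‖(itp (Pt Q t) n).derivative.eval z‖ ≤ 1})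
    (t₀ : ℂ) (ht₀ : t₀ ∈ D) (z₀ : ℂ) (hz₀ : (fun x => (Pt Q t₀).eval x)^[n] z₀ = z₀)
    (hm₀ : ‖(itp (Pt Q t₀) n).derivative.eval z₀‖ ≤ 1) :
    ∀ t ∈ D, ∃ z, (fun x => (Pt Q t).eval x)^[n] z = z ∧
      ‖(itp (Pt Q t) n).derivative.eval z‖ ≤ 1 := by
  by_contra hcon
  push Not at hcon
  obtain ⟨ts, htsD, hts⟩ := hcon
  set fk : ι → ℕ → Polynomial ℂ := fun i k => (itp Q k).eval (γ i) with hfk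
  have hfke : ∀ i k t, (fk i k).eval t = (fun x => (Pt Q t).eval x)^[k] ((γ i).eval t) := by
    intro i k t
    rw [hfk]
    simp only
    rw [Pt_eval_poly, Pt_itp, itp_eval]
  by_cases hA : ∃ t₁ ∈ D, ∃ z₁, (fun x => (Pt Q t₁).eval x)^[n] z₁ = z₁ ∧
      ‖(itp (Pt Q t₁) n).derivative.eval z₁‖ < 1
  · by_cases hB : ∃ t₁ ∈ D, ∃ z₁, (fun x => (Pt Q t₁).eval x)^[n] z₁ = z₁ ∧
      ‖(itp (Pt Q t₁) n).derivative.eval z₁‖ < 1 ∧ (itp (Pt Q t₁) n).derivative.eval z₁ ≠ 0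
    · obtain ⟨t₁, ht₁, z₁, hz₁, hm1, hm0⟩ := hB
      set ρ := (itp (Pt Q t₁) n).derivative.eval z₁ with hρ
      have hρp : 0 < ‖ρ‖ := norm_pos_iff.2 hm0
      have hev := fix_near Q d n hd hn hdeg t₁ z₁ hz₁ (min ‖ρ‖ (1 - ‖ρ‖))
        (lt_min hρp (by linarith))
      have hev2 : ∀ᶠ t in 𝓝[≠] t₁, ∃ i,
          (Tendsto (fun m : ℕ => (fk i ((m+1)*n) - fk i (m*n)).eval t) atTop (𝓝 0) ∧
            ∀ m : ℕ, (fk i ((m+1)*n) - fk i (m*n)).eval t ≠ 0) := by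
        refine Filter.Eventually.filter_mono nhdsWithin_le_nhds ?_
        filter_upwards [hev, hD.mem_nhds ht₁] with t ⟨z, hz, hzm⟩ htD
        rw [← hρ] at hzm
        have h1 := hzm.trans_le (min_le_left _ _)
        have h2 := hzm.trans_le (min_le_right _ _)
        obtain ⟨c, hc, hc1, hc2⟩ := fatou (Pt Q t) R (hR t htD) n hn z hz
          (by
            intro h
            rw [h, zero_sub, norm_neg] at h1
            exact lt_irrefl _ h1)
          (by
            have := norm_sub_norm_le ((itp (Pt Q t) n).derivative.eval z) ρ
            linarith)
        obtain ⟨i, hi⟩ := hγ t c hc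
        refine ⟨i, ?_, ?_⟩
        · simp only [Polynomial.eval_sub, hfke, ← hi]
          exact hc1
        · intro m
          simp only [Polynomial.eval_sub, hfke, ← hi]
          exact sub_ne_zero.2 (hc2 m)
      obtain ⟨i, hi⟩ := freq_pigeon hev2
      have hne : ∀ m : ℕ, fk i ((m+1)*n) - fk i (m*n) ≠ 0 := by
        obtain ⟨t, -, ht⟩ := hi.exists
        intro m h
        apply ht m
        rw [h, Polynomial.eval_zero]
      have hvit := vitali_zero (D := D) (M := R + R) (t₁ := t₁)
        (F := fun m t => (fk i ((m+1)*n) - fk i (m*n)).eval t) hD hDc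
        (fun k => (Polynomial.differentiable _).differentiableOn)
        (by
          intro k t ht
          rw [Polynomial.eval_sub, hfke, hfke]
          exact (norm_sub_le _ _).trans (add_le_add (hb t ht i _) (hb t ht i _)))
        ht₁ (hi.mono fun t ht => ht.1)
      -- countability
      have hcount : (⋃ m : ℕ, {t : ℂ | (fk i ((m+1)*n) - fk i (m*n)).eval t = 0}).Countable := by
        refine Set.countable_iUnion fun m => ?_
        refine Set.Finite.countable ?_
        exact Polynomial.finite_setOfPred_isRoot (hne m)
      have hdense := hcount.dense_compl ℂ
      obtain ⟨t, ht, htc⟩ := hdense.inter_open_nonempty _ (hD.inter hcl.isOpen_compl)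
        ⟨ts, htsD, by
          rintro ⟨z, hz, hz'⟩
          exact absurd hz' (not_le.2 (hts z hz))⟩
      apply htc
      have hrep : ∀ z, (fun x => (Pt Q t).eval x)^[n] z = z →
          1 < ‖deriv ((fun x => (Pt Q t).eval x)^[n]) z‖ := by
        intro z hz
        rw [(itp_hasDerivAt (Pt Q t) n z).deriv]
        by_contra hle
        exact ht.2 ⟨z, hz, not_lt.1 hle⟩
      obtain ⟨K, hK⟩ := repelling_landing (g := (fun x => (Pt Q t).eval x)^[n])
        (y := fun m => (fk i (m*n)).eval t) (R := R)
        (fun z => (itp_hasDerivAt (Pt Q t) n z).differentiableAt) hrep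
        (by
          intro k
          simp only [hfke]
          rw [add_mul, one_mul, add_comm, Function.iterate_add_apply])
        (by
          intro k
          simp only [hfke]
          exact hb t ht.1 i _)
        (by
          have := hvit t ht.1
          simpa only [Polynomial.eval_sub] using this)
      refine Set.mem_iUnion.2 ⟨K, ?_⟩
      change (fk i ((K+1)*n) - fk i (K*n)).eval t = 0
      rw [Polynomial.eval_sub, sub_eq_zero]
      exact hK
    · push Not at hB
      obtain ⟨t₁, ht₁, z₁, hz₁, hm1⟩ := hA
      set ρ := (itp (Pt Q t₁) n).derivative.eval z₁ with hρ
      have hev := fix_near Q d n hd hn hdeg t₁ z₁ hz₁ (1 - ‖ρ‖) (by linarith)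
      have hev2 : ∀ᶠ t in 𝓝[≠] t₁, ∃ i, (fk i n - fk i 0).eval t = 0 := by
        refine Filter.Eventually.filter_mono nhdsWithin_le_nhds ?_
        filter_upwards [hev, hD.mem_nhds ht₁] with t ⟨z, hz, hzm⟩ htD
        rw [← hρ] at hzm
        have h0 := hB t htD z hz (by
            have := norm_sub_norm_le ((itp (Pt Q t) n).derivative.eval z) ρ
            linarith)
        rw [itp_deriv, Finset.prod_eq_zero_iff] at h0
        obtain ⟨j, -, hj⟩ := h0
        obtain ⟨i, hi⟩ := hγ t _ hj
        refine ⟨i, ?_⟩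
        rw [Polynomial.eval_sub, hfke, hfke, ← hi, sub_eq_zero, Function.iterate_zero, id,
          ← Function.iterate_add_apply, add_comm, Function.iterate_add_apply, hz]
      obtain ⟨i, hi⟩ := freq_pigeon hev2
      have hz := poly_zero_of_frequently _ _ hi ts
      rw [Polynomial.eval_sub, hfke, hfke, sub_eq_zero] at hz
      have h1 := hts _ hz
      rw [itp_deriv, Finset.prod_eq_zero (i := 0) (Finset.mem_range.2 hn) (by simpa using hγ' ts i),
        norm_zero] at h1
      linarith
  · push Not at hA
    obtain ⟨E, hE, hEd, hE0⟩ := E_exists Q d n hd hn hdeg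
    have := hurwitz_neutral (D := D) (E := E) (l₀ := (itp (Pt Q t₀) n).derivative.eval z₀)
      (t₀ := t₀) hD hDc hE hEd
      (by
        intro l hl t ht h0
        obtain ⟨z, hz, hz'⟩ := (hE0 l t).1 h0
        have := hA t ht z hz
        rw [hz'] at this
        linarith)
      hm₀ ht₀ ((hE0 _ _).2 ⟨z₀, hz₀, rfl⟩) ts htsD
    obtain ⟨z, hz, hz'⟩ := (hE0 _ _).1 this
    have h1 := hts z hz
    rw [hz'] at h1
    linarith

/-- the family as polynomials over a ring -/
noncomputable def PP {A : Type*} [CommRing A] [Algebra ℂ A] (d : ℕ) (c : Fin (d - 2) → A) (a : A) :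
    Polynomial A :=
  Polynomial.monomial d (algebraMap ℂ A (1 / (d : ℂ))) +
    ((∑ j ∈ Finset.Icc 2 (d - 1), Polynomial.monomial j ((-1 : A) ^ (d - j) *
      (Multiset.map c Finset.univ.val).esymm (d - j) * algebraMap ℂ A (1 / (j : ℂ)))) +
    Polynomial.C (a ^ d))

theorem PP_map {A B : Type*} [CommRing A] [Algebra ℂ A] [CommRing B] [Algebra ℂ B] (d : ℕ)
    (c : Fin (d - 2) → A) (a : A) (φ : A →+* B)
    (hφ : ∀ r : ℂ, φ (algebraMap ℂ A r) = algebraMap ℂ B r) :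
    (PP d c a).map φ = PP d (fun i => φ (c i)) (φ a) := by
  simp only [PP, Polynomial.map_add, Polynomial.map_sum, Polynomial.map_monomial, map_mul,
    map_pow, map_neg, map_one, hφ, Polynomial.map_pow, Polynomial.map_C, Finset.esymm_map_val, map_sum, map_prod]

theorem PP_eval (d : ℕ) (c : Fin (d - 2) → ℂ) (a z : ℂ) :
    (PP d c a).eval z = Pca d c a z := by
  simp only [PP, Polynomial.eval_add, Polynomial.eval_finsetSum, Polynomial.eval_monomial,
    Pca, sigmaE, Algebra.algebraMap_self, RingHom.id_apply, Polynomial.eval_C]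
  rw [← add_assoc]
  congr 2
  · ring
  · refine Finset.sum_congr rfl fun j _ => ?_
    ring

theorem PP_fun (d : ℕ) (c : Fin (d - 2) → ℂ) (a : ℂ) :
    (fun z => (PP d c a).eval z) = Pca d c a := by
  funext z; exact PP_eval d c a z

theorem PP_natDegree (d : ℕ) (hd : 3 ≤ d) (c : Fin (d - 2) → ℂ) (a : ℂ) :
    (PP d c a).natDegree = d := by
  have hd0 : (algebraMap ℂ ℂ (1 / (d : ℂ))) ≠ 0 := by
    have : (d : ℂ) ≠ 0 := by exact_mod_cast (by omega : d ≠ 0)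
    simpa using this
  have h1 : (Polynomial.monomial d (algebraMap ℂ ℂ (1 / (d : ℂ)))).natDegree = d :=
    Polynomial.natDegree_monomial_eq _ hd0
  rw [PP, Polynomial.natDegree_add_eq_left_of_natDegree_lt, h1]
  rw [h1]
  refine lt_of_le_of_lt (b := d - 1) ?_ (by omega)
  refine Polynomial.natDegree_add_le_of_degree_le ?_ ?_
  · refine Polynomial.natDegree_sum_le_of_forall_le _ _ fun j hj => ?_
    exact (Polynomial.natDegree_monomial_le _).trans (Finset.mem_Icc.1 hj).2
  · rw [Polynomial.natDegree_C]; omega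

theorem PP_deriv (d : ℕ) (hd : 3 ≤ d) (c : Fin (d - 2) → ℂ) (a z : ℂ) :
    (PP d c a).derivative.eval z = z * ∏ i, (z - c i) := by
  have hv := Multiset.prod_X_sub_X_eq_sum_esymm (Multiset.map c Finset.univ.val)
  have hcard : (Multiset.map c Finset.univ.val).card = d - 2 := by simp
  have hp : ∏ i, (z - c i) = ∑ k ∈ Finset.range (d - 2 + 1), (-1) ^ k *
      ((Multiset.map c Finset.univ.val).esymm k * z ^ (d - 2 - k)) := by
    have h := congrArg (Polynomial.eval z) hv
    rw [hcard] at h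
    simp only [Polynomial.eval_finsetSum, Polynomial.eval_mul, Polynomial.eval_pow,
      Polynomial.eval_neg, Polynomial.eval_one, Polynomial.eval_C, Polynomial.eval_X] at h
    rw [← h, Multiset.map_map]
    change _ = Polynomial.eval z (∏ i, (Polynomial.X - Polynomial.C (c i)))
    rw [Polynomial.eval_prod]
    simp
  rw [hp, Finset.sum_range_succ', mul_add, Finset.mul_sum]
  have hd0 : (d : ℂ) ≠ 0 := by exact_mod_cast (by omega : d ≠ 0)
  have e0 : z * ((-1) ^ 0 * ((Multiset.map c Finset.univ.val).esymm 0 * z ^ (d - 2 - 0)))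
      = z ^ (d - 1) := by
    have : d - 1 = (d - 2) + 1 := by omega
    rw [this, pow_succ]
    simp [Multiset.esymm]
    ring
  rw [e0]
  simp only [PP, Polynomial.derivative_add, Polynomial.derivative_sum,
    Polynomial.derivative_monomial, Polynomial.derivative_C, Polynomial.eval_add,
    Polynomial.eval_finsetSum, Polynomial.eval_monomial, add_zero,
    Algebra.algebraMap_self, RingHom.id_apply]
  rw [add_comm]
  congr 1
  · refine Finset.sum_nbij' (fun j => d - 1 - j) (fun k => d - 1 - k) ?_ ?_ ?_ ?_ ?_
    · intro j hj
      rw [Finset.mem_Icc] at hj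
      rw [Finset.mem_range]; omega
    · intro k hk
      rw [Finset.mem_range] at hk
      rw [Finset.mem_Icc]; omega
    · intro j hj
      rw [Finset.mem_Icc] at hj
      omega
    · intro k hk
      rw [Finset.mem_range] at hk
      omega
    · intro j hj
      rw [Finset.mem_Icc] at hj
      have e1 : d - 1 - j + 1 = d - j := by omega
      have e2 : d - 2 - (d - j) = j - 2 := by omega
      have e3 : j - 1 = (j - 2) + 1 := by omega
      have hj0 : (j : ℂ) ≠ 0 := by exact_mod_cast (by omega : j ≠ 0)
      rw [e1, e2, e3, pow_succ]
      field_simp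
  · field_simp

theorem PP_crit (d : ℕ) (hd : 3 ≤ d) (c : Fin (d - 2) → ℂ) (a z : ℂ) :
    (PP d c a).derivative.eval z = 0 ↔ ∃ i : Fin (d - 1), z = critPt c i := by
  rw [PP_deriv d hd, mul_eq_zero, Finset.prod_eq_zero_iff]
  constructor
  · rintro (h | ⟨i, -, hi⟩)
    · exact ⟨⟨0, by omega⟩, by simp [critPt, h]⟩
    · refine ⟨⟨i + 1, by have := i.isLt; omega⟩, ?_⟩
      rw [sub_eq_zero] at hi
      simp [critPt, hi]
  · rintro ⟨i, rfl⟩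
    unfold critPt
    split_ifs with h
    · exact Or.inl rfl
    · exact Or.inr ⟨_, Finset.mem_univ _, sub_self _⟩

/-- coefficient bound -/
noncomputable def Mf (d : ℕ) (p : (Fin (d - 2) → ℂ) × ℂ) : ℝ :=
  (∑ j ∈ Finset.Icc 2 (d - 1), ‖(-1 : ℂ) ^ (d - j) * sigmaE p.1 (d - j) / (j : ℂ)‖) + ‖p.2 ^ d‖

theorem sigmaE_cont (n m : ℕ) : Continuous (fun c : Fin n → ℂ => sigmaE c m) := by
  simp only [sigmaE, Finset.esymm_map_val]
  fun_prop

theorem Mf_cont (d : ℕ) : Continuous (Mf d) := by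
  have h : ∀ m, Continuous (fun p : (Fin (d - 2) → ℂ) × ℂ => sigmaE p.1 m) := fun m =>
    (sigmaE_cont _ m).comp continuous_fst
  unfold Mf
  refine Continuous.add (continuous_finsetSum _ fun j _ => ?_) (by fun_prop)
  have := h (d - j)
  fun_prop

theorem Pca_cont (d : ℕ) :
    Continuous (fun x : ((Fin (d - 2) → ℂ) × ℂ) × ℂ => Pca d x.1.1 x.1.2 x.2) := by
  have h : ∀ m, Continuous (fun x : ((Fin (d - 2) → ℂ) × ℂ) × ℂ => sigmaE x.1.1 m) := fun m =>
    (sigmaE_cont _ m).comp (continuous_fst.comp continuous_fst)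
  unfold Pca
  refine Continuous.add (Continuous.add (by fun_prop) (continuous_finsetSum _ fun j _ => ?_))
    (by fun_prop)
  have := h (d - j)
  fun_prop

theorem Pca_iter_cont (d n : ℕ) :
    Continuous (fun x : ((Fin (d - 2) → ℂ) × ℂ) × ℂ => (Pca d x.1.1 x.1.2)^[n] x.2) := by
  induction n with
  | zero => simpa using continuous_snd
  | succ n ih =>
    simp only [Function.iterate_succ_apply']
    exact (Pca_cont d).comp (continuous_fst.prodMk ih)

theorem mult_cont (d : ℕ) (hd : 3 ≤ d) (n : ℕ) :
    Continuous (fun x : ((Fin (d - 2) → ℂ) × ℂ) × ℂ =>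
      (itp (PP d x.1.1 x.1.2) n).derivative.eval x.2) := by
  simp only [itp_deriv, PP_fun, PP_deriv d hd]
  refine continuous_finsetProd _ fun j _ => ?_
  have := Pca_iter_cont d j
  refine this.mul (continuous_finsetProd _ fun i _ => this.sub (by fun_prop))

theorem Pca_escape (d : ℕ) (hd : 3 ≤ d) (p : (Fin (d - 2) → ℂ) × ℂ) (M : ℝ) (hM : Mf d p ≤ M)
    (z : ℂ) (hz : d * (M + 2) < ‖z‖) : 2 * ‖z‖ ≤ ‖Pca d p.1 p.2 z‖ := by
  have hM0 : 0 ≤ M := le_trans (by unfold Mf; positivity) hM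
  have hdR : (3 : ℝ) ≤ d := by exact_mod_cast hd
  have hz1 : 1 ≤ ‖z‖ := by nlinarith
  have hz0 : 0 < ‖z‖ := by linarith
  set s := (∑ j ∈ Finset.Icc 2 (d - 1),
    (-1 : ℂ) ^ (d - j) * sigmaE p.1 (d - j) * z ^ j / (j : ℂ)) + p.2 ^ d with hs
  have hP : Pca d p.1 p.2 z = z ^ d / d + s := by rw [hs, Pca, add_assoc]
  have hsb : ‖s‖ ≤ Mf d p * ‖z‖ ^ (d - 1) := by
    rw [hs, Mf, add_mul, Finset.sum_mul]
    refine (norm_add_le _ _).trans (add_le_add ((norm_sum_le _ _).trans ?_) ?_)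
    · refine Finset.sum_le_sum fun j hj => ?_
      have e : (-1 : ℂ) ^ (d - j) * sigmaE p.1 (d - j) * z ^ j / (j : ℂ) =
        (-1 : ℂ) ^ (d - j) * sigmaE p.1 (d - j) / (j : ℂ) * z ^ j := by ring
      rw [e, norm_mul, norm_pow z]
      exact mul_le_mul_of_nonneg_left (pow_le_pow_right₀ hz1 (Finset.mem_Icc.1 hj).2)
        (norm_nonneg _)
    · exact le_mul_of_one_le_right (norm_nonneg _) (one_le_pow₀ hz1)
  have hlead : ‖z ^ d / (d : ℂ)‖ = ‖z‖ ^ (d - 1) * (‖z‖ / d) := by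
    have : d = (d - 1) + 1 := by omega
    rw [norm_div, norm_pow, Complex.norm_natCast]
    conv_lhs => rw [this, pow_succ]
    rw [← this]
    ring
  have h1 : M + 2 ≤ ‖z‖ / d := by
    rw [le_div_iff₀ (by linarith)]; linarith
  have hpow : ‖z‖ ≤ ‖z‖ ^ (d - 1) := le_self_pow₀ hz1 (by omega)
  have h2 : ‖z ^ d / (d : ℂ)‖ ≤ ‖Pca d p.1 p.2 z‖ + ‖s‖ := by
    rw [hP]
    have := norm_sub_le (z ^ d / (d : ℂ) + s) s
    rwa [add_sub_cancel_right] at this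
  rw [hlead] at h2
  have h3 : ‖z‖ ^ (d - 1) * (M + 2) ≤ ‖z‖ ^ (d - 1) * (‖z‖ / d) := by gcongr
  have h4 : Mf d p * ‖z‖ ^ (d - 1) ≤ M * ‖z‖ ^ (d - 1) := by gcongr
  nlinarith

theorem escape_grow (f : ℂ → ℂ) (R : ℝ) (hR : ∀ z : ℂ, R < ‖z‖ → 2 * ‖z‖ ≤ ‖f z‖) (z : ℂ)
    (hz : R < ‖z‖) (k : ℕ) : 2 ^ k * ‖z‖ ≤ ‖f^[k] z‖ := by
  induction k with
  | zero => simp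
  | succ k ih =>
    rw [Function.iterate_succ_apply']
    have h1 : ‖z‖ ≤ 2 ^ k * ‖z‖ := le_mul_of_one_le_left (norm_nonneg _) (one_le_pow₀ (by norm_num))
    have h2 := hR _ (hz.trans_le (h1.trans ih))
    rw [pow_succ]
    linarith

theorem fixed_bound (f : ℂ → ℂ) (R : ℝ) (hR0 : 0 ≤ R)
    (hR : ∀ z : ℂ, R < ‖z‖ → 2 * ‖z‖ ≤ ‖f z‖) (n : ℕ) (hn : 1 ≤ n) (z : ℂ)
    (hz : f^[n] z = z) : ‖z‖ ≤ R := by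
  by_contra h
  push Not at h
  have h1 := escape_grow f R hR z h n
  rw [hz] at h1
  have h2 : (2 : ℝ) ≤ 2 ^ n := le_self_pow₀ (by norm_num) (by omega)
  nlinarith

theorem orbit_bound (f : ℂ → ℂ) (R : ℝ) (hR0 : 0 ≤ R)
    (hR : ∀ z : ℂ, R < ‖z‖ → 2 * ‖z‖ ≤ ‖f z‖) (z : ℂ)
    (hz : Bornology.IsBounded (Set.range fun n => f^[n] z)) (k : ℕ) : ‖f^[k] z‖ ≤ R := by
  by_contra h
  push Not at h
  obtain ⟨B, hB⟩ := isBounded_iff_forall_norm_le.1 hz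
  obtain ⟨m, hm⟩ := pow_unbounded_of_one_lt (B / ‖f^[k] z‖) (by norm_num : (1:ℝ) < 2)
  have h1 := escape_grow f R hR _ h m
  have h2 := hB (f^[m] (f^[k] z)) ⟨m + k, by simp [Function.iterate_add_apply]⟩
  rw [div_lt_iff₀ (by linarith)] at hm
  linarith

/-- parameters with a non-repelling point of period dividing n -/
def NR (d n : ℕ) : Set ((Fin (d - 2) → ℂ) × ℂ) :=
  {p | ∃ z, (Pca d p.1 p.2)^[n] z = z ∧ ‖(itp (PP d p.1 p.2) n).derivative.eval z‖ ≤ 1}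

theorem NR_closed (d : ℕ) (hd : 3 ≤ d) (n : ℕ) (hn : 1 ≤ n) : IsClosed (NR d n) := by
  refine isClosed_of_closure_subset fun p hp => ?_
  obtain ⟨u, huS, hu⟩ := mem_closure_iff_seq_limit.1 hp
  choose z hz hzm using huS
  have hMev : ∀ᶠ k in atTop, Mf d (u k) ≤ Mf d p + 1 :=
    (((Mf_cont d).tendsto p).comp hu).eventually (ge_mem_nhds (by linarith))
  have hMp : 0 ≤ Mf d p := by unfold Mf; positivity
  have hbd : ∀ᶠ k in atTop, z k ∈ Metric.closedBall (0:ℂ) (d * (Mf d p + 1 + 2)) := by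
    filter_upwards [hMev] with k hk
    rw [mem_closedBall_zero_iff]
    exact fixed_bound _ _ (by positivity) (fun w hw => Pca_escape d hd (u k) _ hk w hw) n hn _ (hz k)
  obtain ⟨z', -, φ, hφ, hlim⟩ := (isCompact_closedBall (0:ℂ) _).tendsto_subseq' hbd.frequently
  have hpair : Tendsto (fun k => (u (φ k), z (φ k))) atTop (𝓝 (p, z')) :=
    (hu.comp hφ.tendsto_atTop).prodMk_nhds hlim
  refine ⟨z', ?_, ?_⟩
  · have h1 := ((Pca_iter_cont d n).tendsto (p, z')).comp hpair
    refine tendsto_nhds_unique h1 (hlim.congr fun k => ?_)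
    exact (hz (φ k)).symm
  · have h1 := (((mult_cont d hd n).tendsto (p, z')).comp hpair).norm
    exact le_of_tendsto h1 (Eventually.of_forall fun k => hzm (φ k))

theorem NR_local (d : ℕ) (hd : 3 ≤ d) (n : ℕ) (hn : 1 ≤ n) (p : (Fin (d - 2) → ℂ) × ℂ)
    (hp : p ∈ interior (connLocus d)) (hpS : p ∈ NR d n) : p ∈ interior (NR d n) := by
  obtain ⟨ε, hε, hball⟩ := Metric.isOpen_iff.1 isOpen_interior p hp
  rw [mem_interior_iff_mem_nhds, Metric.mem_nhds_iff]
  refine ⟨ε / 2, by positivity, fun q hq => ?_⟩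
  rw [mem_ball_iff_norm] at hq
  set L : ℂ → (Fin (d - 2) → ℂ) × ℂ := fun t => p + t • (q - p) with hL
  have hLc : Continuous L := by rw [hL]; fun_prop
  have hLD : ∀ t ∈ Metric.ball (0:ℂ) 2, L t ∈ Metric.ball p ε := by
    intro t ht
    rw [mem_ball_zero_iff] at ht
    rw [mem_ball_iff_norm, hL]
    simp only [add_sub_cancel_left, norm_smul]
    have := norm_nonneg (q - p)
    have := norm_nonneg t
    nlinarith
  obtain ⟨M, hM⟩ := (isCompact_closedBall p ε).exists_bound_of_continuousOn
    (Mf_cont d).continuousOn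
  have hMD : ∀ t ∈ Metric.ball (0:ℂ) 2, Mf d (L t) ≤ M := fun t ht =>
    (le_abs_self _).trans (hM _ (Metric.ball_subset_closedBall (hLD t ht)))
  have hM0 : 0 ≤ M := (norm_nonneg _).trans (hM p (Metric.mem_closedBall_self hε.le))
  set ct : Fin (d - 2) → Polynomial ℂ := fun i =>
    Polynomial.C (p.1 i) + Polynomial.X * Polynomial.C (q.1 i - p.1 i) with hct
  set at' : Polynomial ℂ := Polynomial.C p.2 + Polynomial.X * Polynomial.C (q.2 - p.2) with hat
  have hcte : ∀ i t, (ct i).eval t = (L t).1 i := by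
    intro i t; simp [hct, hL]
  have hate : ∀ t, at'.eval t = (L t).2 := by
    intro t; simp [hat, hL]
  set Q := PP d ct at' with hQ
  have hQt : ∀ t, Pt Q t = PP d (L t).1 (L t).2 := by
    intro t
    rw [Pt, hQ, PP_map d ct at' (Polynomial.evalRingHom t) (by intro r; simp)]
    simp only [Polynomial.coe_evalRingHom, hcte, hate]
  set γ : Fin (d - 1) → Polynomial ℂ := fun i =>
    if h : (i : ℕ) = 0 then 0 else ct ⟨(i : ℕ) - 1, by have := i.isLt; omega⟩ with hγ
  have hγe : ∀ i t, (γ i).eval t = critPt (L t).1 i := by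
    intro i t
    simp only [hγ, critPt]
    split_ifs
    · simp
    · exact hcte _ _
  have hfun : ∀ t, (fun x => (Pt Q t).eval x) = Pca d (L t).1 (L t).2 := by
    intro t; rw [hQt, PP_fun]
  have hcl : IsClosed {t : ℂ | ∃ z, (fun x => (Pt Q t).eval x)^[n] z = z ∧
      ‖(itp (Pt Q t) n).derivative.eval z‖ ≤ 1} := by
    have := (NR_closed d hd n hn).preimage hLc
    convert this using 1
    ext t
    simp only [hQt, PP_fun]
    rfl
  obtain ⟨z₀, hz₀, hm₀⟩ := hpS
  have hL0 : L 0 = p := by simp [hL]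
  have hL1 : L 1 = q := by simp [hL]
  have hesc : ∀ t ∈ Metric.ball (0:ℂ) 2, ∀ z : ℂ, d * (M + 2) < ‖z‖ →
      2 * ‖z‖ ≤ ‖Pca d (L t).1 (L t).2 z‖ := fun t ht z hz =>
    Pca_escape d hd (L t) M (hMD t ht) z hz
  have key := one_param Q d n (by omega) hn (fun t => by rw [hQt, PP_natDegree d hd]) γ
    (fun t z h => by
      rw [hQt, PP_crit d hd] at h
      simpa only [hγe] using h)
    (fun t i => by
      rw [hQt, PP_crit d hd]
      exact ⟨i, hγe i t⟩)
    (Metric.ball 0 2) Metric.isOpen_ball (convex_ball (0:ℂ) 2).isPreconnected (d * (M + 2))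
    (fun t ht z hz => by
      have := hesc t ht z hz
      rwa [hQt, PP_eval])
    (fun t ht i k => by
      rw [hfun, hγe]
      refine orbit_bound _ _ (by positivity) (hesc t ht) _ ?_ k
      exact interior_subset (hball (hLD t ht)) i)
    hcl 0 (by simp) z₀ (by rw [hfun, hL0]; exact hz₀) (by rw [hQt, hL0]; exact hm₀)
    1 (by simp)
  obtain ⟨z, hz, hm⟩ := key
  rw [hfun, hL1] at hz
  rw [hQt, hL1] at hm
  exact ⟨z, hz, hm⟩

theorem stmt8 (d : ℕ) (hd : 3 ≤ d) (U : Set ((Fin (d - 2) → ℂ) × ℂ))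
    (hU : ∃ p ∈ interior (connLocus d), U = connectedComponentIn (interior (connLocus d)) p)
    (hnr : ∃ p ∈ U, ∃ z : ℂ, ∃ n : ℕ, 1 ≤ n ∧ (Pca d p.1 p.2)^[n] z = z ∧
      ‖deriv ((Pca d p.1 p.2)^[n]) z‖ ≤ 1) :
    ∀ p ∈ closure U, ∃ z₀ : ℂ, ∃ m : ℕ, 1 ≤ m ∧ (Pca d p.1 p.2)^[m] z₀ = z₀ ∧
      ‖deriv ((Pca d p.1 p.2)^[m]) z₀‖ ≤ 1 := by
  have hder : ∀ (p : (Fin (d - 2) → ℂ) × ℂ) (n : ℕ) (z : ℂ),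
      deriv ((Pca d p.1 p.2)^[n]) z = (itp (PP d p.1 p.2) n).derivative.eval z := by
    intro p n z
    have := (itp_hasDerivAt (PP d p.1 p.2) n z).deriv
    rwa [PP_fun] at this
  obtain ⟨p₀, hp₀, rfl⟩ := hU
  obtain ⟨p, hp, z, n, hn, hz, hm⟩ := hnr
  have hsub : connectedComponentIn (interior (connLocus d)) p₀ ⊆ interior (connLocus d) :=
    connectedComponentIn_subset _ _
  have hpS : p ∈ NR d n := ⟨z, hz, by rw [← hder]; exact hm⟩
  have hUS : connectedComponentIn (interior (connLocus d)) p₀ ⊆ interior (NR d n) := by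
    refine isPreconnected_connectedComponentIn.subset_left_of_subset_union isOpen_interior
      (NR_closed d hd n hn).isOpen_compl ?_ ?_ ⟨p, hp, NR_local d hd n hn p (hsub hp) hpS⟩
    · exact Set.disjoint_left.2 fun x hx hx' => hx' (interior_subset hx)
    · intro x hx
      by_cases hxS : x ∈ NR d n
      · exact Or.inl (NR_local d hd n hn x (hsub hx) hxS)
      · exact Or.inr hxS
  intro q hq
  have hqS : q ∈ NR d n :=
    closure_minimal (hUS.trans interior_subset) (NR_closed d hd n hn) hq
  obtain ⟨w, hw, hwm⟩ := hqS
  exact ⟨w, n, hn, hw, by rw [hder]; exact hwm⟩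
end
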